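/- Let p and q be primes satisfying conditions (1) or conditions (2). Then the class number of the triquadratic field Q(√p, √q, i) (a CM field of degree 8 over Q) is odd. -/

import Mathlib

noncomputable section

open IntermediateField NumberField

/-- Conditions (1). -/
def Cond1 (p q : ℕ) : Prop :=
  p.Prime ∧ q.Prime ∧ p % 4 = 1 ∧ q % 4 = 3 ∧
    jacobiSym 2 p = -1 ∧ jacobiSym 2 q = 1 ∧ jacobiSym (p : ℤ) q = -1

/-- Conditions (2). -/
def Cond2 (p q : ℕ) : Prop :=
  p.Prime ∧ q.Prime ∧ p % 4 = 3 ∧ q % 4 = 3 ∧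
    jacobiSym 2 p = -1 ∧ jacobiSym 2 q = 1 ∧ jacobiSym (p : ℤ) q = -1

/-- The field `ℚ(√p, √q, i)` as a subfield of `ℂ`. -/
def Kf (p q : ℕ) : IntermediateField ℚ ℂ :=
  adjoin ℚ {((Real.sqrt p : ℝ) : ℂ), ((Real.sqrt q : ℝ) : ℂ), Complex.I}

/-!
Adjoin `i`, then `√p`, then `√q` to `ℚ`: the class number stays odd at each quadratic step
`K = F(√D)` with `F` totally complex and `D ≡ 1 (mod 4)` prime up to sign. As `i ∈ F`, adjoining
`√p` is the same as adjoining `√(-p)`, so the sign of `D` is free.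

Let `Sel(K) ⊆ Kˣ/(Kˣ)²` consist of the classes of elements whose divisor is a square. It is an
extension of the `2`-torsion of the class group by the units modulo squares, so `h(K)` is odd
exactly when `Sel(K)` has the order that Dirichlet's unit theorem gives for the latter. Bounding
`Sel(K)` along `Fˣ/(Fˣ)² → Kˣ/(Kˣ)² → Fˣ/(Fˣ)²`, where the second map is the norm and the middle
is exact, gives Chevalley's criterion: if `h(F)` is odd and `2^t` divides `2 [E : E ∩ N(Kˣ)]`,
where `E` is the unit group of `F` and `t` the number of ramified primes, then `h(K)` is odd.

Here `t ≤ 2`, since a prime of `F ∋ i` above a rational prime `≡ 3 (mod 4)` has even residue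
degree. When `t = 2` it suffices to find a unit of `F` which is not a square modulo a prime above
`D`, for then it is not a local norm there. In `ℚ(i)` with `p ≡ 5 (mod 8)`, the unit `i` works. In
`ℚ(i, √p)`, Pell's equation provides a unit whose `(q + 1)`-st power in `𝔽_{q²}` is `-1`:
`a + b√p` of norm `-1` if `p ≡ 1 (mod 4)`, and `(a + b√p)(1 + i)/2` with `a² - p b² = -2` if
`p ≡ 3 (mod 8)`.
-/

open IsDedekindDomain

/-- The quotient `G / Gⁿ` of a commutative group by its `n`-th powers. For `G = Kˣ` this is the
ambient group of the Selmer groups of a Dedekind domain with fraction field `K`. -/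
abbrev PowQuotient (G : Type*) [CommGroup G] (n : ℕ) : Type _ :=
  G ⧸ (powMonoidHom n : G →* G).range

namespace PowQuotient

variable {G H : Type*} [CommGroup G] [CommGroup H]

theorem mk_eq_one_iff {n : ℕ} {x : G} : (x : PowQuotient G n) = 1 ↔ ∃ y, y ^ n = x :=
  QuotientGroup.eq_one_iff x

theorem mk_pow_eq_one (n : ℕ) (x : G) : ((x ^ n : G) : PowQuotient G n) = 1 :=
  mk_eq_one_iff.mpr ⟨x, rfl⟩

/-- The homomorphism `G / Gⁿ →* H / Hⁿ` induced by `f : G →* H`. -/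
def map (n : ℕ) (f : G →* H) : PowQuotient G n →* PowQuotient H n :=
  QuotientGroup.map _ _ f (by rintro _ ⟨x, rfl⟩; exact ⟨f x, (map_pow f x n).symm⟩)

@[simp]
theorem map_mk (n : ℕ) (f : G →* H) (x : G) :
    map n f (x : PowQuotient G n) = (f x : PowQuotient H n) := rfl

end PowQuotient

section PowIndex

variable {G : Type*} [CommGroup G] {n : ℕ}

theorem range_powMonoidHom_subgroupOf {T : Subgroup G} (hT : ∀ x : G, x ^ n ∈ T → x ∈ T) :
    (powMonoidHom n : G →* G).range.subgroupOf T = (powMonoidHom n : T →* T).range := by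
  ext x
  constructor
  · rintro ⟨y, hy⟩
    exact ⟨⟨y, hT y (hy ▸ x.2 : powMonoidHom n y ∈ T)⟩, Subtype.ext hy⟩
  · rintro ⟨y, rfl⟩
    exact ⟨y, rfl⟩

theorem range_powMonoidHom_quotient (T : Subgroup G) :
    (powMonoidHom n : G ⧸ T →* G ⧸ T).range =
      (powMonoidHom n : G →* G).range.map (QuotientGroup.mk' T) := by
  ext x
  constructor
  · rintro ⟨y, rfl⟩
    obtain ⟨y, rfl⟩ := QuotientGroup.mk'_surjective T y
    exact ⟨y ^ n, ⟨y, rfl⟩, map_pow _ _ _⟩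
  · rintro ⟨_, ⟨y, rfl⟩, rfl⟩
    exact ⟨y, rfl⟩

theorem card_powQuotient_eq_mul {T : Subgroup G} (hT : ∀ x : G, x ^ n ∈ T → x ∈ T) :
    Nat.card (PowQuotient G n) =
      Nat.card (PowQuotient T n) * Nat.card (PowQuotient (G ⧸ T) n) := by
  simp only [← Subgroup.index_eq_card]
  rw [range_powMonoidHom_quotient, Subgroup.index_map, QuotientGroup.ker_mk',
    MonoidHom.range_eq_top.mpr (QuotientGroup.mk'_surjective T), Subgroup.index_top, mul_one,
    ← range_powMonoidHom_subgroupOf hT, ← Subgroup.relIndex, ← Subgroup.relIndex_sup_left,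
    Subgroup.relIndex_mul_index le_sup_left]

end PowIndex

theorem card_powQuotient_units_two (K : Type*) [Field K] [NumberField K] :
    Nat.card (PowQuotient (𝓞 K)ˣ 2) = 2 ^ Fintype.card (InfinitePlace K) := by
  have hroots : Nat.card (PowQuotient (Units.torsion K) 2) = 2 := by
    rw [← Subgroup.index_eq_card, IsCyclic.index_powMonoidHom_range, Nat.gcd_eq_right_iff_dvd]
    exact (Units.even_torsionOrder K).two_dvd
  have hfree : Nat.card (PowQuotient ((𝓞 K)ˣ ⧸ Units.torsion K) 2) = 2 ^ Units.rank K := by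
    rw [← Units.finrank_modTorsion]
    exact AddSubgroup.index_range_nsmul (Additive ((𝓞 K)ˣ ⧸ Units.torsion K)) 2
  rw [card_powQuotient_eq_mul (T := Units.torsion K) fun u hu =>
      (isOfFinOrder_pow.mp hu).resolve_right two_ne_zero, hroots, hfree, ← pow_succ',
    Units.rank, Nat.sub_add_cancel Fintype.card_pos]

section Selmer

variable {R : Type*} [CommRing R] [IsDedekindDomain R]

theorem exists_pow_eq_of_forall_dvd_count {n : ℕ} {I : Ideal R} (hI : I ≠ 0)
    (h : ∀ v : HeightOneSpectrum R,
      n ∣ (Associates.mk v.asIdeal).count (Associates.mk I).factors) :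
    ∃ J : Ideal R, J ^ n = I := by
  rcases eq_or_ne n 0 with rfl | hn
  · refine ⟨I, ?_⟩
    rw [pow_zero, ← Ideal.finprod_heightOneSpectrum_factorization hI]
    refine (finprod_eq_one_of_forall_eq_one fun v => ?_).symm
    rw [HeightOneSpectrum.maxPowDividing, zero_dvd_iff.mp (h v), pow_zero]
  choose f hf using h
  have hfin : (Function.mulSupport fun v : HeightOneSpectrum R => v.asIdeal ^ f v).Finite := by
    refine (Ideal.hasFiniteMulSupport hI).subset fun v hv hv' => hv ?_
    have hv'' : v.maxPowDividing I = 1 := hv'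
    rw [HeightOneSpectrum.maxPowDividing, hf v, mul_comm, pow_mul] at hv''
    exact (pow_eq_one_iff.mp hv'').resolve_right hn
  refine ⟨∏ᶠ v : HeightOneSpectrum R, v.asIdeal ^ f v, ?_⟩
  rw [finprod_pow hfin, ← Ideal.finprod_heightOneSpectrum_factorization hI]
  exact finprod_congr fun v => by rw [HeightOneSpectrum.maxPowDividing, hf v, mul_comm, pow_mul]

variable {K : Type*} [Field K] [Algebra R K] [IsFractionRing R K]

variable (R K) in
/-- The Selmer group `K(S, n)`: classes in `Kˣ / (Kˣ)ⁿ` whose valuation is divisible by `n` at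
every prime outside `S`. This is Mathlib's Selmer group with all parameters explicit. -/
abbrev selmer (S : Set (HeightOneSpectrum R)) (n : ℕ) : Subgroup (PowQuotient Kˣ n) :=
  selmerGroup (S := S)

theorem valuationOfNeZero_eq_ofAdd_neg_count {x : Kˣ} {a : R} (hx : (x : K) = algebraMap R K a)
    (v : HeightOneSpectrum R) :
    v.valuationOfNeZero x = Multiplicative.ofAdd
      (-((Associates.mk v.asIdeal).count (Associates.mk (Ideal.span {a})).factors : ℤ)) := by
  have ha : a ≠ 0 := by
    rintro rfl
    exact x.ne_zero (by rw [hx, map_zero])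
  rw [← WithZero.coe_inj, HeightOneSpectrum.valuationOfNeZero_eq, hx,
    HeightOneSpectrum.valuation_of_algebraMap, HeightOneSpectrum.intValuation_if_neg v ha]
  rfl

theorem valuationOfNeZeroMod_mk_eq_one_iff (v : HeightOneSpectrum R) {n : ℕ} {x : Kˣ} :
    v.valuationOfNeZeroMod n (x : PowQuotient Kˣ n) = 1 ↔
      (n : ℤ) ∣ (v.valuationOfNeZero x).toAdd := by
  rw [← Int.mem_zmultiples_iff]
  exact ((Int.quotientZMultiplesNatEquivZMod n).toMultiplicative.map_eq_one_iff).trans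
    (QuotientAddGroup.eq_zero_iff (N := AddSubgroup.zmultiples (n : ℤ)) _)

theorem mk_mem_selmer_iff {S : Set (HeightOneSpectrum R)} {n : ℕ} {x : Kˣ} :
    (x : PowQuotient Kˣ n) ∈ selmer R K S n ↔
      ∀ v ∉ S, (n : ℤ) ∣ (v.valuationOfNeZero x).toAdd :=
  forall₂_congr fun v _ => valuationOfNeZeroMod_mk_eq_one_iff v

theorem mk_mem_selmer_empty_iff {n : ℕ} (hn : n ≠ 0) {x : Kˣ} {a : R}
    (hx : (x : K) = algebraMap R K a) :
    (x : PowQuotient Kˣ n) ∈ selmer R K ∅ n ↔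
      ∃ I : Ideal R, I ^ n = Ideal.span {a} := by
  have ha : Ideal.span {a} ≠ 0 := by
    rw [Ne, Ideal.zero_eq_bot, Ideal.span_singleton_eq_bot]
    rintro rfl
    exact x.ne_zero (by rw [hx, map_zero])
  simp only [mk_mem_selmer_iff, Set.mem_empty_iff_false, not_false_eq_true, forall_const,
    valuationOfNeZero_eq_ofAdd_neg_count hx, toAdd_ofAdd, dvd_neg, Int.natCast_dvd_natCast]
  refine ⟨exists_pow_eq_of_forall_dvd_count ha, ?_⟩
  rintro ⟨I, hI⟩ v
  have hI0 : I ≠ 0 := by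
    rintro rfl
    exact ha (by rw [← hI, zero_pow hn])
  rw [← hI, Associates.mk_pow,
    Associates.count_pow (Associates.mk_ne_zero.mpr hI0) v.associates_irreducible]
  exact dvd_mul_right _ _

variable (R) in
theorem exists_eq_algebraMap_mk_eq {n : ℕ} (hn : n ≠ 0) (x : PowQuotient Kˣ n) :
    ∃ (a : R) (z : Kˣ), (z : K) = algebraMap R K a ∧ (z : PowQuotient Kˣ n) = x := by
  obtain ⟨x, rfl⟩ := QuotientGroup.mk_surjective x
  obtain ⟨a, b, hb, h⟩ := IsFractionRing.div_surjective (A := R) (x : K)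
  have hb0 : algebraMap R K b ≠ 0 := IsFractionRing.to_map_ne_zero_of_mem_nonZeroDivisors hb
  refine ⟨a * b ^ (n - 1), x * Units.mk0 _ hb0 ^ n, ?_, ?_⟩
  · rw [Units.val_mul, Units.val_pow_eq_pow_val, Units.val_mk0, ← h, map_mul, map_pow,
      ← mul_pow_sub_one hn]
    field_simp
  · rw [QuotientGroup.mk_mul, PowQuotient.mk_pow_eq_one, mul_one]

theorem exists_pow_eq_of_pow_eq_algebraMap {n : ℕ} (hn : n ≠ 0) {a : R} {y : K}
    (h : y ^ n = algebraMap R K a) : ∃ b : R, b ^ n = a := by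
  obtain ⟨b, rfl⟩ := IsIntegrallyClosed.exists_algebraMap_eq_of_isIntegral_pow (R := R)
    (Nat.pos_of_ne_zero hn) (h ▸ isIntegral_algebraMap)
  exact ⟨b, IsFractionRing.injective R K (by rw [map_pow, h])⟩

theorem exists_mk_map_unit_eq_iff {n : ℕ} (hn : n ≠ 0) {x : Kˣ} {a : R}
    (hx : (x : K) = algebraMap R K a) :
    (∃ u : Rˣ, (Units.map (algebraMap R K : R →* K) u : PowQuotient Kˣ n) = x) ↔
      ∃ b : R, Associated (b ^ n) a := by
  constructor
  · rintro ⟨u, hu⟩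
    obtain ⟨y, hy⟩ := PowQuotient.mk_eq_one_iff.mp
      (show ((Units.map (algebraMap R K : R →* K) u⁻¹ * x : Kˣ) : PowQuotient Kˣ n) = 1 by
        rw [QuotientGroup.mk_mul, ← hu, ← QuotientGroup.mk_mul, ← map_mul, inv_mul_cancel,
          map_one, QuotientGroup.mk_one])
    obtain ⟨b, hb⟩ := exists_pow_eq_of_pow_eq_algebraMap (R := R) (K := K) (a := ↑u⁻¹ * a) hn
      (y := y) (by simpa [hx] using congrArg Units.val hy)
    exact ⟨b, u, by rw [hb, mul_comm, Units.mul_inv_cancel_left]⟩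
  · rintro ⟨b, u, hu⟩
    have hb : algebraMap R K b ≠ 0 := by
      intro hb
      apply x.ne_zero
      rw [hx, ← hu, map_mul, map_pow, hb, zero_pow hn, zero_mul]
    refine ⟨u, ?_⟩
    have hxu : x = Units.mk0 _ hb ^ n * Units.map (algebraMap R K : R →* K) u := by
      ext
      simp [hx, ← hu]
    rw [hxu, QuotientGroup.mk_mul, PowQuotient.mk_pow_eq_one, one_mul]

theorem isPrincipal_of_isPrincipal_pow_of_fromUnit_surjective {n : ℕ} (hn : n ≠ 0)
    (hsurj : Function.Surjective (selmerGroup.fromUnit (R := R) (K := K) (n := n)))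
    {I : Ideal R} (hI : (I ^ n).IsPrincipal) : I.IsPrincipal := by
  obtain ⟨a, ha⟩ := hI
  rw [Ideal.submodule_span_eq] at ha
  rcases eq_or_ne a 0 with rfl | ha0
  · rw [Set.singleton_zero, Ideal.span_zero, ← Ideal.zero_eq_bot, pow_eq_zero_iff hn] at ha
    exact ha ▸ bot_isPrincipal
  have ha0' : algebraMap R K a ≠ 0 := (FaithfulSMul.algebraMap_eq_zero_iff R K).not.mpr ha0
  obtain ⟨u, hu⟩ := hsurj ⟨Units.mk0 _ ha0', (mk_mem_selmer_empty_iff hn rfl).mpr ⟨I, ha⟩⟩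
  obtain ⟨b, hb⟩ := (exists_mk_map_unit_eq_iff hn rfl).mp ⟨u, congrArg Subtype.val hu⟩
  have hIb : I ^ n = Ideal.span {b} ^ n := by
    rw [ha, Ideal.span_singleton_pow, Ideal.span_singleton_eq_span_singleton.mpr hb]
  have hdvd {J J' : Ideal R} (h : J ^ n = J' ^ n) : J ∣ J' :=
    (UniqueFactorizationMonoid.pow_dvd_pow_iff_dvd hn).mp h.dvd
  exact ⟨b, dvd_antisymm (hdvd hIb) (hdvd hIb.symm)⟩

variable (R K) in
theorem fromUnit_surjective_iff_coprime [Fintype (ClassGroup R)] {n : ℕ} (hn : n ≠ 0) :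
    Function.Surjective (selmerGroup.fromUnit (R := R) (K := K) (n := n)) ↔
      n.Coprime (Fintype.card (ClassGroup R)) := by
  constructor
  · intro hsurj
    refine Nat.Coprime.symm (Nat.coprime_of_dvd fun l hl hlcard hln => ?_)
    have : Fact l.Prime := ⟨hl⟩
    obtain ⟨c, hc⟩ := exists_prime_orderOf_dvd_card l hlcard
    obtain ⟨⟨I, hI0⟩, rfl⟩ := ClassGroup.mk0_surjective c
    have hIn : (I ^ n).IsPrincipal := by
      rw [← ClassGroup.mk0_eq_one_iff (pow_mem hI0 n), ← SubmonoidClass.mk_pow (hx := hI0),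
        map_pow]
      exact orderOf_dvd_iff_pow_eq_one.mp (hc ▸ hln)
    have hI := isPrincipal_of_isPrincipal_pow_of_fromUnit_surjective hn hsurj hIn
    rw [← ClassGroup.mk0_eq_one_iff hI0, ← orderOf_eq_one_iff, hc] at hI
    exact hl.ne_one hI
  · rintro hcop ⟨x, hx⟩
    obtain ⟨a, z, hz, rfl⟩ := exists_eq_algebraMap_mk_eq R hn x
    obtain ⟨I, hI⟩ := (mk_mem_selmer_empty_iff hn hz).mp hx
    obtain ⟨b, rfl⟩ := Ideal.IsPrincipal.of_isPrincipal_pow_of_coprime hcop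
      (hI ▸ ⟨a, rfl⟩ : (I ^ n).IsPrincipal)
    rw [Ideal.submodule_span_eq, Ideal.span_singleton_pow,
      Ideal.span_singleton_eq_span_singleton] at hI
    obtain ⟨u, hu⟩ := (exists_mk_map_unit_eq_iff hn hz).mpr ⟨b, hI⟩
    exact ⟨u, Subtype.ext hu⟩

theorem card_range_fromUnit (n : ℕ) [Fact (0 < n)] :
    Nat.card (selmerGroup.fromUnit (R := R) (K := K) (n := n)).range =
      Nat.card (PowQuotient Rˣ n) := by
  rw [← Subgroup.index_ker, selmerGroup.fromUnit_ker, Subgroup.index_eq_card]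

theorem index_ker_selmerGroup_valuation_dvd (S : Finset (HeightOneSpectrum R)) (n : ℕ) :
    (selmerGroup.valuation (R := R) (K := K) (S := S) (n := n)).ker.index ∣ n ^ S.card := by
  rw [Subgroup.index_ker]
  refine (Subgroup.card_subgroup_dvd_card _).trans (dvd_of_eq ?_)
  rw [Nat.card_fun, Nat.card_congr Multiplicative.toAdd, Nat.card_zmod]
  simp

variable (K) in
theorem card_selmer_dvd (S : Finset (HeightOneSpectrum R)) (n : ℕ) :
    Nat.card (selmer R K S n) ∣ Nat.card (selmer R K ∅ n) * n ^ S.card := by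
  have hle : selmer R K ∅ n ≤ selmer R K S n := selmerGroup.monotone (Set.empty_subset _)
  rw [← Subgroup.card_mul_index selmerGroup.valuation.ker]
  refine mul_dvd_mul (dvd_of_eq ?_) (index_ker_selmerGroup_valuation_dvd S n)
  rw [selmerGroup.valuation_ker_eq]
  exact Nat.card_congr (Subgroup.subgroupOfEquivOfLe hle).toEquiv

theorem odd_classNumber_iff_card_selmer_dvd (K : Type*) [Field K] [NumberField K] :
    Odd (classNumber K) ↔
      Nat.card (selmer (𝓞 K) K ∅ 2) ∣ 2 ^ Fintype.card (InfinitePlace K) := by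
  have : Fact (0 < 2) := ⟨two_pos⟩
  rw [← Nat.coprime_two_left, classNumber, ← fromUnit_surjective_iff_coprime (𝓞 K) K two_ne_zero,
    ← card_powQuotient_units_two, ← card_range_fromUnit (K := K), ← MonoidHom.range_eq_top]
  constructor
  · intro h
    rw [h, Subgroup.card_top]
  · intro h
    have hpos : 0 < Nat.card (selmerGroup.fromUnit (R := 𝓞 K) (K := K) (n := 2)).range := by
      rw [card_range_fromUnit, card_powQuotient_units_two]
      positivity
    have : Finite (selmer (𝓞 K) K ∅ 2) :=
      Nat.finite_of_card_ne_zero (ne_zero_of_dvd_ne_zero hpos.ne' h)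
    exact Subgroup.eq_top_of_le_card _ (Nat.le_of_dvd hpos h)

end Selmer

section Quadratic

variable {F K : Type*} [Field F] [Field K] [Algebra F K]

variable (F K) in
/-- The homomorphism `Fˣ / (Fˣ)ⁿ → Kˣ / (Kˣ)ⁿ` induced by the inclusion of `F` in `K`. -/
abbrev powQuotientAlgebraMap (n : ℕ) : PowQuotient Fˣ n →* PowQuotient Kˣ n :=
  PowQuotient.map n (Units.map (algebraMap F K : F →* K))

variable (F K) in
/-- The homomorphism `Kˣ / (Kˣ)ⁿ → Fˣ / (Fˣ)ⁿ` induced by the norm of `K / F`. -/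
abbrev powQuotientNorm (n : ℕ) : PowQuotient Kˣ n →* PowQuotient Fˣ n :=
  PowQuotient.map n (Units.map (Algebra.norm F (S := K)))

section

variable [Algebra.IsQuadraticExtension F K]

theorem sq_eq_trace_mul_sub_norm (y : K) :
    y ^ 2 = algebraMap F K (Algebra.trace F K y) * y - algebraMap F K (Algebra.norm F y) := by
  let b := Module.finBasisOfFinrankEq F K (Algebra.IsQuadraticExtension.finrank_eq_two F K)
  have h := (Algebra.leftMulMatrix b y).aeval_self_charpoly
  rw [Matrix.charpoly_fin_two, ← Algebra.trace_eq_matrix_trace, ← Algebra.norm_eq_matrix_det] at h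
  simp only [map_add, map_sub, map_mul, map_pow, Polynomial.aeval_X, Polynomial.aeval_C] at h
  apply Algebra.leftMulMatrix_injective b
  simp only [map_sub, map_mul, map_pow, AlgHom.commutes]
  rw [← sub_eq_zero, ← h]
  abel

theorem exists_eq_sq_mul_algebraMap {x : K} {b : F} (hb : b ≠ 0)
    (hx : Algebra.norm F x = b ^ 2) :
    ∃ (y : K) (a : F), y ≠ 0 ∧ a ≠ 0 ∧ x = y ^ 2 * algebraMap F K a := by
  have hsq := sq_eq_trace_mul_sub_norm (F := F) x
  rw [hx, map_pow] at hsq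
  by_cases h : x + algebraMap F K b = 0
  · exact ⟨1, -b, one_ne_zero, neg_ne_zero.mpr hb, by simp [eq_neg_of_add_eq_zero_left h]⟩
  have key : (x + algebraMap F K b) ^ 2 =
      algebraMap F K (Algebra.trace F K x + 2 * b) * x := by
    simp only [map_add, map_mul, map_ofNat]
    linear_combination hsq
  have ht : Algebra.trace F K x + 2 * b ≠ 0 := by
    intro ht
    rw [ht, map_zero, zero_mul] at key
    exact h (pow_eq_zero_iff two_ne_zero |>.mp key)
  have ht' : algebraMap F K (Algebra.trace F K x + 2 * b) ≠ 0 :=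
    (FaithfulSMul.algebraMap_eq_zero_iff F K).not.mpr ht
  refine ⟨x + algebraMap F K b, (Algebra.trace F K x + 2 * b)⁻¹, h, inv_ne_zero ht, ?_⟩
  rw [key, map_inv₀]
  field_simp

theorem ker_powQuotientNorm_le :
    (powQuotientNorm F K 2).ker ≤ (powQuotientAlgebraMap F K 2).range := by
  intro x hx
  obtain ⟨x, rfl⟩ := QuotientGroup.mk_surjective x
  obtain ⟨b, hb⟩ := PowQuotient.mk_eq_one_iff.mp (MonoidHom.mem_ker.mp hx)
  obtain ⟨y, a, hy, ha, hxy⟩ := exists_eq_sq_mul_algebraMap b.ne_zero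
    (congrArg Units.val hb).symm
  refine ⟨Units.mk0 a ha, ?_⟩
  have hx : x = Units.mk0 y hy ^ 2 * Units.map (algebraMap F K : F →* K) (Units.mk0 a ha) :=
    Units.ext hxy
  rw [hx, QuotientGroup.mk_mul, PowQuotient.mk_pow_eq_one, one_mul]
  rfl

theorem exists_sq_eq_algebraMap_not_isSquare (h2 : (2 : F) ≠ 0) :
    ∃ (δ : K) (d : F), δ ^ 2 = algebraMap F K d ∧ ¬ IsSquare d := by
  obtain ⟨y, hy⟩ : ∃ y : K, y ∉ (⊥ : Subalgebra F K) := by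
    by_contra! h
    have := Subalgebra.bot_eq_top_iff_finrank_eq_one.mp (top_le_iff.mp fun y _ => h y)
    rw [Algebra.IsQuadraticExtension.finrank_eq_two] at this
    omega
  have hsq := sq_eq_trace_mul_sub_norm (F := F) y
  refine ⟨2 * y - algebraMap F K (Algebra.trace F K y),
    Algebra.trace F K y ^ 2 - 4 * Algebra.norm F y, ?_, ?_⟩
  · simp only [map_sub, map_pow, map_mul, map_ofNat]
    linear_combination 4 * hsq
  · rintro ⟨e, he⟩
    have h2' : (2 : K) ≠ 0 := by
      rw [← map_ofNat (algebraMap F K) 2]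
      exact (FaithfulSMul.algebraMap_eq_zero_iff F K).not.mpr h2
    have hprod : (2 * y - algebraMap F K (Algebra.trace F K y + e)) *
        (2 * y - algebraMap F K (Algebra.trace F K y - e)) = 0 := by
      have he' := congrArg (algebraMap F K) he
      simp only [map_sub, map_add, map_pow, map_mul, map_ofNat] at he' ⊢
      linear_combination 4 * hsq + he'
    have hmem (t : F) (ht : 2 * y - algebraMap F K t = 0) : y ∈ (⊥ : Subalgebra F K) := by
      refine Algebra.mem_bot.mpr ⟨t / 2, ?_⟩
      rw [map_div₀, map_ofNat, ← sub_eq_zero.mp ht, mul_div_cancel_left₀ _ h2']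
    exact hy ((mul_eq_zero.mp hprod).elim (hmem _) (hmem _))

theorem two_dvd_card_ker_powQuotientAlgebraMap (h2 : (2 : F) ≠ 0) :
    2 ∣ Nat.card (powQuotientAlgebraMap F K 2).ker := by
  have : Fact (Nat.Prime 2) := ⟨Nat.prime_two⟩
  obtain ⟨δ, d, hδ, hd⟩ := exists_sq_eq_algebraMap_not_isSquare (K := K) h2
  have hd0 : d ≠ 0 := fun h => hd (h ▸ IsSquare.zero)
  have hδ0 : δ ≠ 0 := by
    rintro rfl
    exact hd0 (by simpa using hδ.symm)
  have hker : (Units.mk0 d hd0 : PowQuotient Fˣ 2) ∈ (powQuotientAlgebraMap F K 2).ker :=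
    PowQuotient.mk_eq_one_iff.mpr ⟨Units.mk0 δ hδ0, Units.ext hδ⟩
  have horder : orderOf (⟨_, hker⟩ : (powQuotientAlgebraMap F K 2).ker) = 2 := by
    refine orderOf_eq_prime (Subtype.ext (PowQuotient.mk_pow_eq_one 2 _)) fun h => hd ?_
    obtain ⟨y, hy⟩ := PowQuotient.mk_eq_one_iff.mp (congrArg Subtype.val h)
    exact ⟨y, by simpa [pow_two] using (congrArg Units.val hy).symm⟩
  exact horder.symm.dvd.trans (orderOf_dvd_natCard _)

end

end Quadratic

section Norm

variable {F K : Type*} [Field F] [Field K] [Algebra F K] [NumberField F] [NumberField K]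

theorem map_powQuotientNorm_selmer_le {n : ℕ} (hn : n ≠ 0) :
    (selmer (𝓞 K) K ∅ n).map (powQuotientNorm F K n) ≤ selmer (𝓞 F) F ∅ n := by
  rintro _ ⟨x, hx, rfl⟩
  obtain ⟨a, z, hz, rfl⟩ := exists_eq_algebraMap_mk_eq (𝓞 K) hn x
  obtain ⟨I, hI⟩ := (mk_mem_selmer_empty_iff hn hz).mp hx
  refine (mk_mem_selmer_empty_iff (a := Algebra.intNorm (𝓞 F) (𝓞 K) a) hn ?_).mpr
    ⟨Ideal.relNorm (𝓞 F) I, ?_⟩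
  · rw [Algebra.algebraMap_intNorm (K := F) (L := K), ← hz]
    rfl
  · rw [← map_pow, hI, Ideal.relNorm_singleton]

theorem valuationOfNeZero_map_eq {v : HeightOneSpectrum (𝓞 F)} {w : HeightOneSpectrum (𝓞 K)}
    [w.asIdeal.LiesOver v.asIdeal] [Algebra.IsUnramifiedAt (𝓞 F) w.asIdeal] (a : Fˣ) :
    w.valuationOfNeZero (Units.map (algebraMap F K : F →* K) a) = v.valuationOfNeZero a := by
  have he : v.asIdeal.ramificationIdx' w.asIdeal = 1 :=
    (Ideal.ramificationIdx'_eq_ramificationIdx v.asIdeal w.asIdeal v.ne_bot).trans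
      (Ideal.ramificationIdx_eq_one w.asIdeal (𝓞 F))
  have h := HeightOneSpectrum.valuation_liesOver K v w (a : F)
  rw [he, pow_one] at h
  rw [← WithZero.coe_inj, HeightOneSpectrum.valuationOfNeZero_eq,
    HeightOneSpectrum.valuationOfNeZero_eq, h]
  rfl

theorem comap_powQuotientAlgebraMap_selmer_le {S : Set (HeightOneSpectrum (𝓞 F))}
    (hS : ∀ v ∉ S, Algebra.IsUnramifiedIn (𝓞 K) v.asIdeal) (n : ℕ) :
    (selmer (𝓞 K) K ∅ n).comap (powQuotientAlgebraMap F K n) ≤ selmer (𝓞 F) F S n := by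
  intro x hx
  obtain ⟨a, rfl⟩ := QuotientGroup.mk_surjective x
  rw [Subgroup.mem_comap, PowQuotient.map_mk, mk_mem_selmer_iff] at hx
  refine mk_mem_selmer_iff.mpr fun v hv => ?_
  obtain ⟨P, hP, hPv⟩ := Ideal.exists_maximal_ideal_liesOver_of_isIntegral (S := 𝓞 K) v.asIdeal
  obtain ⟨w, rfl⟩ : ∃ w : HeightOneSpectrum (𝓞 K), w.asIdeal = P :=
    ⟨⟨P, hP.isPrime, Ideal.ne_bot_of_liesOver_of_ne_bot v.ne_bot P⟩, rfl⟩
  have : Algebra.IsUnramifiedAt (𝓞 F) w.asIdeal := hS v hv w.asIdeal hP.isPrime hPv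
  rw [← valuationOfNeZero_map_eq (w := w)]
  exact hx w (Set.notMem_empty w)

end Norm

theorem card_ker_mul_card_dvd {X Y Z : Type*} [Group X] [Group Y] [Group Z] {j : X →* Y}
    {N : Y →* Z} (hN : N.ker ≤ j.range) {A : Subgroup Y} {B : Subgroup X} (hB : A.comap j ≤ B) :
    Nat.card j.ker * Nat.card A ∣ Nat.card B * Nat.card (A.map N) := by
  have hA : Nat.card A = Nat.card (A ⊓ N.ker : Subgroup Y) * Nat.card (A.map N) := by
    rw [← Subgroup.relIndex_ker, ← Subgroup.relIndex_bot_left, ← Subgroup.relIndex_bot_left,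
      ← Subgroup.inf_relIndex_left A N.ker, Subgroup.relIndex_mul_relIndex _ _ _ bot_le inf_le_left]
  have hcomap : Nat.card (A.comap j) =
      Nat.card j.ker * Nat.card ((A.comap j).map j) := by
    rw [← Subgroup.relIndex_ker, ← Subgroup.relIndex_bot_left, ← Subgroup.relIndex_bot_left,
      Subgroup.relIndex_mul_relIndex _ _ _ bot_le (Subgroup.ker_le_comap j A)]
  have hle : A ⊓ N.ker ≤ (A.comap j).map j := by
    rw [Subgroup.map_comap_eq]
    exact le_inf (inf_le_right.trans hN) inf_le_left
  rw [hA, ← mul_assoc]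
  refine mul_dvd_mul_right ?_ _
  calc Nat.card j.ker * Nat.card (A ⊓ N.ker : Subgroup Y)
      ∣ Nat.card j.ker * Nat.card ((A.comap j).map j) :=
        mul_dvd_mul_left _ (Subgroup.card_dvd_of_le hle)
    _ = Nat.card (A.comap j) := hcomap.symm
    _ ∣ Nat.card B := Subgroup.card_dvd_of_le hB

section AmbiguousClasses

variable (F K : Type*) [Field F] [Field K] [Algebra F K] [NumberField F] [NumberField K]

/-- The units of `F` that are norms of elements (not necessarily units) of `K`. The index of this
subgroup enters the ambiguous class number formula. -/
def normUnits : Subgroup (𝓞 F)ˣ :=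
  (Units.map (Algebra.norm F (S := K))).range.comap (Units.map (algebraMap (𝓞 F) F : 𝓞 F →* F))

variable {F K}

theorem mem_normUnits {u : (𝓞 F)ˣ} :
    u ∈ normUnits F K ↔ ∃ x : K, Algebra.norm F x = algebraMap (𝓞 F) F u := by
  constructor
  · rintro ⟨x, hx⟩
    exact ⟨x, congrArg Units.val hx⟩
  · rintro ⟨x, hx⟩
    have hx0 : x ≠ 0 := by
      rintro rfl
      rw [Algebra.norm_zero, eq_comm, FaithfulSMul.algebraMap_eq_zero_iff] at hx
      exact u.ne_zero hx
    exact ⟨Units.mk0 x hx0, Units.ext hx⟩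

variable [Algebra.IsQuadraticExtension F K]

theorem sq_mem_normUnits (u : (𝓞 F)ˣ) : u ^ 2 ∈ normUnits F K := by
  refine mem_normUnits.mpr ⟨algebraMap F K (algebraMap (𝓞 F) F u), ?_⟩
  rw [Algebra.norm_algebraMap, Algebra.IsQuadraticExtension.finrank_eq_two,
    Units.val_pow_eq_pow_val, map_pow]

theorem two_dvd_index_normUnits {ε : (𝓞 F)ˣ} (hε : ε ∉ normUnits F K) :
    2 ∣ (normUnits F K).index := by
  have : Fact (Nat.Prime 2) := ⟨Nat.prime_two⟩
  have horder : orderOf (ε : (𝓞 F)ˣ ⧸ normUnits F K) = 2 :=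
    orderOf_eq_prime ((QuotientGroup.eq_one_iff _).mpr (sq_mem_normUnits ε))
      fun h => hε ((QuotientGroup.eq_one_iff ε).mp h)
  exact horder.symm.dvd.trans (orderOf_dvd_natCard _)

theorem comap_fromUnit_range_powQuotientNorm [Fact (0 < 2)] :
    ((powQuotientNorm F K 2).range.subgroupOf (selmer (𝓞 F) F ∅ 2)).comap selmerGroup.fromUnit =
      normUnits F K := by
  ext u
  constructor
  · rintro ⟨x, hx⟩
    obtain ⟨x, rfl⟩ := QuotientGroup.mk_surjective x
    obtain ⟨y, hy⟩ := QuotientGroup.eq.mp hx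
    refine mem_normUnits.mpr ⟨x * algebraMap F K y, ?_⟩
    rw [map_mul, Algebra.norm_algebraMap, Algebra.IsQuadraticExtension.finrank_eq_two]
    exact congrArg Units.val (eq_inv_mul_iff_mul_eq.mp hy)
  · rintro ⟨x, hx⟩
    exact ⟨x, congrArg QuotientGroup.mk hx⟩

theorem card_map_powQuotientNorm_selmer_mul_index_dvd (hF : Odd (classNumber F)) :
    Nat.card ((selmer (𝓞 K) K ∅ 2).map (powQuotientNorm F K 2)) * (normUnits F K).index ∣
      Nat.card (selmer (𝓞 F) F ∅ 2) := by
  have : Fact (0 < 2) := ⟨two_pos⟩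
  have hsurj := (fromUnit_surjective_iff_coprime (𝓞 F) F two_ne_zero).mpr
    (Nat.coprime_two_left.mpr hF)
  rw [← comap_fromUnit_range_powQuotientNorm, Subgroup.index_comap_of_surjective _ hsurj,
    ← Subgroup.card_mul_index ((powQuotientNorm F K 2).range.subgroupOf (selmer (𝓞 F) F ∅ 2))]
  refine mul_dvd_mul_right ?_ _
  rw [← Subgroup.inf_subgroupOf_right,
    Nat.card_congr (Subgroup.subgroupOfEquivOfLe inf_le_right).toEquiv]
  refine Subgroup.card_dvd_of_le (le_inf ?_ (map_powQuotientNorm_selmer_le two_ne_zero))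
  rintro _ ⟨x, -, rfl⟩
  exact ⟨x, rfl⟩

/-- A form of Chevalley's ambiguous class number formula. -/
theorem odd_classNumber_of_isQuadraticExtension [IsUnramifiedAtInfinitePlaces F K]
    (hF : Odd (classNumber F)) {S : Finset (HeightOneSpectrum (𝓞 F))}
    (hS : ∀ v ∉ S, Algebra.IsUnramifiedIn (𝓞 K) v.asIdeal)
    (hcard : 2 ^ S.card ∣ 2 * (normUnits F K).index) : Odd (classNumber K) := by
  set r := Fintype.card (InfinitePlace F)
  set A := Nat.card (selmer (𝓞 K) K ∅ 2)
  set B := Nat.card (selmer (𝓞 F) F ∅ 2)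
  set C := Nat.card ((selmer (𝓞 K) K ∅ 2).map (powQuotientNorm F K 2))
  set i := (normUnits F K).index
  have hB : B ∣ 2 ^ r := (odd_classNumber_iff_card_selmer_dvd F).mp hF
  have hC : C * i ∣ B := card_map_powQuotientNorm_selmer_mul_index_dvd hF
  have hA : 2 * A ∣ B * 2 ^ S.card * C :=
    calc 2 * A ∣ Nat.card (powQuotientAlgebraMap F K 2).ker * A :=
          mul_dvd_mul_right (two_dvd_card_ker_powQuotientAlgebraMap two_ne_zero) _
      _ ∣ Nat.card (selmer (𝓞 F) F S 2) * C :=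
          card_ker_mul_card_dvd ker_powQuotientNorm_le
            (comap_powQuotientAlgebraMap_selmer_le hS 2)
      _ ∣ B * 2 ^ S.card * C := mul_dvd_mul_right (card_selmer_dvd F S 2) _
  have hi : i ≠ 0 := by
    intro hi
    rw [hi, mul_zero] at hC
    exact (pow_pos two_pos r).ne' (zero_dvd_iff.mp (hC.trans hB))
  rw [odd_classNumber_iff_card_selmer_dvd, IsUnramifiedAtInfinitePlaces.card_infinitePlace F K,
    Algebra.IsQuadraticExtension.finrank_eq_two]
  refine Nat.dvd_of_mul_dvd_mul_right (Nat.pos_of_ne_zero (mul_ne_zero two_ne_zero hi)) ?_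
  calc A * (2 * i) = 2 * A * i := by ring
    _ ∣ B * 2 ^ S.card * C * i := mul_dvd_mul_right hA i
    _ = B * (C * i) * 2 ^ S.card := by ring
    _ ∣ 2 ^ r * 2 ^ r * (2 * i) := mul_dvd_mul (mul_dvd_mul hB (hC.trans hB)) hcard
    _ = 2 ^ (r * 2) * (2 * i) := by rw [← pow_add, mul_two]

end AmbiguousClasses

section Ramification

variable {F K : Type*} [Field F] [Field K] [Algebra F K] [NumberField F] [NumberField K]

open Polynomial in
theorem isUnramifiedAt_of_aeval_derivative_notMem {θ : 𝓞 K}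
    (hθ : Algebra.adjoin F {algebraMap (𝓞 K) K θ} = ⊤) {f : (𝓞 F)[X]} (hf : aeval θ f = 0)
    {P : Ideal (𝓞 K)} [P.IsPrime] (hP : aeval θ (derivative f) ∉ P) :
    Algebra.IsUnramifiedAt (𝓞 F) P := by
  rw [← not_dvd_differentIdeal_iff, Ideal.dvd_iff_le]
  intro hle
  obtain ⟨g, rfl⟩ := minpoly.isIntegrallyClosed_dvd (Algebra.IsIntegral.isIntegral θ) hf
  refine hP ?_
  rw [derivative_mul, map_add, map_mul, map_mul, minpoly.aeval, zero_mul, add_zero]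
  exact P.mul_mem_right _ (hle (aeval_derivative_mem_differentIdeal (𝓞 F) F K θ hθ))

theorem exists_two_mul_sub_one_eq {E : Type*} [Field E] [CharZero E] {D : ℤ} (hD : D % 4 = 1)
    {δ : E} (hδ : δ ^ 2 = D) :
    ∃ θ : 𝓞 E, 2 * algebraMap (𝓞 E) E θ - 1 = δ ∧ θ ^ 2 - θ = (D / 4 : ℤ) := by
  have hD' : (D : E) = 4 * (D / 4 : ℤ) + 1 := by
    exact_mod_cast (show D = 4 * (D / 4) + 1 by omega)
  have hθ : ((1 + δ) / 2) ^ 2 - (1 + δ) / 2 = ((D / 4 : ℤ) : E) := by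
    linear_combination (hδ + hD') / 4
  have hint : IsIntegral ℤ ((1 + δ) / 2) := by
    refine ⟨.X ^ 2 - .X - .C (D / 4), by monicity!, ?_⟩
    simp only [Polynomial.eval₂_sub, Polynomial.eval₂_X_pow, Polynomial.eval₂_X,
      Polynomial.eval₂_C]
    exact sub_eq_zero.mpr hθ
  obtain ⟨θ, hθδ⟩ : ∃ θ : 𝓞 E, algebraMap (𝓞 E) E θ = (1 + δ) / 2 := ⟨⟨_, hint⟩, rfl⟩
  refine ⟨θ, by rw [hθδ]; ring, FaithfulSMul.algebraMap_injective (𝓞 E) E ?_⟩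
  rw [map_sub, map_pow, map_intCast, hθδ, hθ]

theorem isUnramifiedIn_of_sq_eq_intCast {D : ℤ} (hD : D % 4 = 1) {δ : K} (hδ : δ ^ 2 = D)
    (htop : Algebra.adjoin F {δ} = ⊤) {𝔭 : Ideal (𝓞 F)} (h𝔭 : (D : 𝓞 F) ∉ 𝔭) :
    Algebra.IsUnramifiedIn (𝓞 K) 𝔭 := by
  intro P hP hover
  obtain ⟨θ, hθδ, hθ⟩ := exists_two_mul_sub_one_eq hD hδ
  have hθtop : Algebra.adjoin F {algebraMap (𝓞 K) K θ} = ⊤ := by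
    rw [eq_top_iff, ← htop, Algebra.adjoin_le_iff, Set.singleton_subset_iff, ← hθδ]
    exact sub_mem (mul_mem (ofNat_mem _ 2) (Algebra.self_mem_adjoin_singleton F _)) (one_mem _)
  refine isUnramifiedAt_of_aeval_derivative_notMem (f := .X ^ 2 - .X - .C ((D / 4 : ℤ) : 𝓞 F))
    hθtop ?_ fun hmem => h𝔭 ?_
  · simp [hθ]
  · have hsq : (2 * θ - 1) ^ 2 = (D : 𝓞 K) := by
      apply FaithfulSMul.algebraMap_injective (𝓞 K) K
      rw [map_pow, map_sub, map_mul, map_one, map_ofNat, map_intCast, hθδ, hδ]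
    have hmem' : 2 * θ - 1 ∈ P := by simpa [map_ofNat, one_add_one_eq_two] using hmem
    rw [hover.over, Ideal.mem_comap, map_intCast, ← hsq]
    exact P.pow_mem_of_mem hmem' 2 two_pos

end Ramification

section QuadraticGenerator

variable {F K : Type*} [Field F] [Field K] [Algebra F K]

theorem eq_zero_of_add_mul_sqrt_eq_zero {D : F} (hD : ¬ IsSquare D) {δ : K}
    (hδ : δ ^ 2 = algebraMap F K D) {x y : F} (h : algebraMap F K x + algebraMap F K y * δ = 0) :
    x = 0 ∧ y = 0 := by
  by_cases hy : y = 0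
  · subst hy
    simpa using h
  · refine absurd ⟨x / y, ?_⟩ hD
    apply FaithfulSMul.algebraMap_injective F K
    have hy' : algebraMap F K y ≠ 0 := by simpa using hy
    have hδ' : δ = -(algebraMap F K x / algebraMap F K y) := by
      field_simp
      linear_combination h
    rw [← hδ, hδ', map_mul, map_div₀]
    ring

variable [Algebra.IsQuadraticExtension F K] {D : F} {δ : K}

theorem exists_eq_add_mul_sqrt (hD : ¬ IsSquare D) (hδ : δ ^ 2 = algebraMap F K D) (z : K) :
    ∃ x y : F, z = algebraMap F K x + algebraMap F K y * δ := by
  have hli : LinearIndependent F ![1, δ] := by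
    refine LinearIndependent.pair_iff.mpr fun s t h => ?_
    rw [Algebra.smul_def, Algebra.smul_def, mul_one] at h
    exact eq_zero_of_add_mul_sqrt_eq_zero hD hδ h
  have htop := hli.span_eq_top_of_card_eq_finrank'
    (by rw [Algebra.IsQuadraticExtension.finrank_eq_two, Fintype.card_fin])
  have hz : z ∈ Submodule.span F (Set.range ![1, δ]) := htop ▸ Submodule.mem_top
  rw [Matrix.range_cons_cons_empty, Submodule.mem_span_pair] at hz
  obtain ⟨x, y, h⟩ := hz
  exact ⟨x, y, by rw [← h, Algebra.smul_def, Algebra.smul_def, mul_one]⟩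

theorem norm_add_mul_sqrt (hD : ¬ IsSquare D) (hδ : δ ^ 2 = algebraMap F K D) (x y : F) :
    Algebra.norm F (algebraMap F K x + algebraMap F K y * δ) = x ^ 2 - D * y ^ 2 := by
  by_cases hy : y = 0
  · simp [hy, Algebra.norm_algebraMap, Algebra.IsQuadraticExtension.finrank_eq_two]
  have hsq := sq_eq_trace_mul_sub_norm (F := F) (algebraMap F K x + algebraMap F K y * δ)
  set t := Algebra.trace F K (algebraMap F K x + algebraMap F K y * δ)
  set N := Algebra.norm F (algebraMap F K x + algebraMap F K y * δ)
  obtain ⟨hN, ht⟩ : x ^ 2 + D * y ^ 2 - t * x + N = 0 ∧ 2 * x * y - t * y = 0 := by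
    refine eq_zero_of_add_mul_sqrt_eq_zero hD hδ ?_
    simp only [map_add, map_sub, map_mul, map_pow, map_ofNat]
    linear_combination hsq - algebraMap F K y ^ 2 * hδ
  have ht' : t = 2 * x := mul_right_cancel₀ hy (by linear_combination -ht)
  linear_combination hN + x * ht'

theorem adjoin_sqrt_eq_top (hD : ¬ IsSquare D) (hδ : δ ^ 2 = algebraMap F K D) :
    Algebra.adjoin F {δ} = ⊤ := by
  refine eq_top_iff.mpr fun z _ => ?_
  obtain ⟨x, y, rfl⟩ := exists_eq_add_mul_sqrt hD hδ z
  exact add_mem (algebraMap_mem _ x)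
    (mul_mem (algebraMap_mem _ y) (Algebra.self_mem_adjoin_singleton F δ))

theorem isSquare_or_isSquare_mul [CharZero F] (hD : ¬ IsSquare D) (hδ : δ ^ 2 = algebraMap F K D)
    {c : F} (hc : IsSquare (algebraMap F K c)) : IsSquare c ∨ IsSquare (D * c) := by
  obtain ⟨z, hz⟩ := hc
  obtain ⟨x, y, rfl⟩ := exists_eq_add_mul_sqrt hD hδ z
  obtain ⟨hc, hxy⟩ : x ^ 2 + D * y ^ 2 - c = 0 ∧ 2 * x * y = 0 := by
    refine eq_zero_of_add_mul_sqrt_eq_zero hD hδ ?_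
    simp only [map_add, map_sub, map_mul, map_pow, map_ofNat]
    linear_combination -hz - algebraMap F K y ^ 2 * hδ
  obtain rfl | rfl : x = 0 ∨ y = 0 := by simpa [or_assoc] using hxy
  · exact Or.inr ⟨D * y, by linear_combination -D * hc⟩
  · exact Or.inl ⟨x, by linear_combination -hc⟩

end QuadraticGenerator

section PrimesAbove

variable {F : Type*} [Field F] [NumberField F] {D : ℤ} {v : HeightOneSpectrum (𝓞 F)}

variable (F) in
/-- The finite set of primes of `F` containing the nonzero rational integer `D`. -/
def primesAbove (hD : D ≠ 0) : Finset (HeightOneSpectrum (𝓞 F)) :=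
  (Ideal.finite_factors (I := Ideal.span {(D : 𝓞 F)}) (by simpa using hD)).toFinset

theorem mem_primesAbove {hD : D ≠ 0} : v ∈ primesAbove F hD ↔ (D : 𝓞 F) ∈ v.asIdeal := by
  simp [primesAbove, Ideal.dvd_span_singleton]

theorem prod_primesAbove_dvd (hD : D ≠ 0) :
    ∏ v ∈ primesAbove F hD, v.asIdeal ∣ Ideal.span {(D : 𝓞 F)} :=
  Finset.prod_dvd_of_coprime
    (fun _ _ _ _ hne => Ideal.isCoprime_of_isMaximal fun h => hne (HeightOneSpectrum.ext h))
    fun _ hv => Ideal.dvd_span_singleton.mpr (mem_primesAbove.mp hv)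

theorem absNorm_span_intCast (D : ℤ) :
    Ideal.absNorm (Ideal.span {(D : 𝓞 F)}) = D.natAbs ^ Module.finrank ℚ F := by
  rw [Ideal.absNorm_span_singleton, ← eq_intCast (algebraMap ℤ (𝓞 F)), Algebra.norm_algebraMap,
    Int.natAbs_pow, RingOfIntegers.rank]

theorem prod_absNorm_primesAbove_dvd (hD : D ≠ 0) :
    ∏ v ∈ primesAbove F hD, Ideal.absNorm v.asIdeal ∣ D.natAbs ^ Module.finrank ℚ F := by
  rw [← map_prod, ← absNorm_span_intCast]
  exact map_dvd _ (prod_primesAbove_dvd hD)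

theorem exists_absNorm_eq_pow (hD : Prime D) (hv : (D : 𝓞 F) ∈ v.asIdeal) :
    ∃ f ≠ 0, Ideal.absNorm v.asIdeal = D.natAbs ^ f := by
  have hdvd := (Finset.dvd_prod_of_mem _ (mem_primesAbove.mpr hv)).trans
    (prod_absNorm_primesAbove_dvd (F := F) hD.ne_zero)
  obtain ⟨f, -, hf⟩ := (Nat.dvd_prime_pow (Int.prime_iff_natAbs_prime.mp hD)).mp hdvd
  refine ⟨f, ?_, hf⟩
  rintro rfl
  exact v.isPrime.ne_top (Ideal.absNorm_eq_one_iff.mp hf)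

theorem sq_dvd_absNorm (hD : Prime D) (hD4 : D.natAbs % 4 = 3) {i : 𝓞 F} (hi : i ^ 2 = -1)
    (hv : (D : 𝓞 F) ∈ v.asIdeal) : D.natAbs ^ 2 ∣ Ideal.absNorm v.asIdeal := by
  obtain ⟨f, hf, h⟩ := exists_absNorm_eq_pow hD hv
  suffices f ≠ 1 from h ▸ pow_dvd_pow _ (by omega)
  rintro rfl
  let := Fintype.ofFinite (𝓞 F ⧸ v.asIdeal)
  let := Ideal.Quotient.field v.asIdeal
  have hsq : IsSquare (-1 : 𝓞 F ⧸ v.asIdeal) :=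
    ⟨Ideal.Quotient.mk _ i, by rw [← map_mul, ← pow_two, hi, map_neg, map_one]⟩
  rw [FiniteField.isSquare_neg_one_iff, ← Nat.card_eq_fintype_card, ← Submodule.cardQuot_apply,
    ← Ideal.absNorm_apply, h, pow_one] at hsq
  exact hsq hD4

section

variable (hD : Prime D) {m : ℕ}
  (hm : ∀ v ∈ primesAbove F hD.ne_zero, D.natAbs ^ m ∣ Ideal.absNorm v.asIdeal)

include hm

theorem mul_card_primesAbove_le : m * (primesAbove F hD.ne_zero).card ≤ Module.finrank ℚ F := by
  refine (Nat.pow_dvd_pow_iff_le_right (Int.prime_iff_natAbs_prime.mp hD).one_lt).mp ?_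
  rw [pow_mul, ← Finset.prod_const]
  exact (Finset.prod_dvd_prod_of_dvd _ _ hm).trans (prod_absNorm_primesAbove_dvd hD.ne_zero)

variable (hcard : m * (primesAbove F hD.ne_zero).card = Module.finrank ℚ F)

include hcard

theorem prod_absNorm_primesAbove_eq :
    ∏ v ∈ primesAbove F hD.ne_zero, Ideal.absNorm v.asIdeal =
      ∏ _v ∈ primesAbove F hD.ne_zero, D.natAbs ^ m := by
  refine Nat.dvd_antisymm ?_ (Finset.prod_dvd_prod_of_dvd _ _ hm)
  rw [Finset.prod_const, ← pow_mul, hcard]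
  exact prod_absNorm_primesAbove_dvd hD.ne_zero

theorem absNorm_eq_pow_of_mem_primesAbove (hv : v ∈ primesAbove F hD.ne_zero) :
    Ideal.absNorm v.asIdeal = D.natAbs ^ m := by
  have hle (w) (hw : w ∈ primesAbove F hD.ne_zero) : D.natAbs ^ m ≤ Ideal.absNorm w.asIdeal :=
    Nat.le_of_dvd (Nat.pos_of_ne_zero (Ideal.absNorm_eq_zero_iff.not.mpr w.ne_bot)) (hm w hw)
  have hpos : 0 < D.natAbs ^ m := pow_pos (Int.natAbs_pos.mpr hD.ne_zero) m
  by_contra hne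
  exact (Finset.prod_lt_prod (fun _ _ => hpos) hle ⟨v, hv, (hle v hv).lt_of_ne' hne⟩).ne'
    (prod_absNorm_primesAbove_eq hD hm hcard)

theorem span_intCast_eq_prod :
    Ideal.span {(D : 𝓞 F)} = ∏ v ∈ primesAbove F hD.ne_zero, v.asIdeal := by
  obtain ⟨J, hJ⟩ := prod_primesAbove_dvd (F := F) hD.ne_zero
  have hnorm := congrArg Ideal.absNorm hJ
  rw [absNorm_span_intCast, map_mul, map_prod, prod_absNorm_primesAbove_eq hD hm hcard,
    Finset.prod_const, ← pow_mul, hcard] at hnorm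
  have hJ1 : Ideal.absNorm J = 1 :=
    (Nat.eq_of_mul_eq_mul_left (pow_pos (Int.natAbs_pos.mpr hD.ne_zero) _)
      ((mul_one _).trans hnorm)).symm
  rw [hJ, Ideal.absNorm_eq_one_iff.mp hJ1, Ideal.mul_top]

theorem notMem_sq_of_mem_primesAbove (hv : v ∈ primesAbove F hD.ne_zero) :
    (D : 𝓞 F) ∉ v.asIdeal ^ 2 := by
  classical
  rw [← Ideal.dvd_span_singleton, span_intCast_eq_prod hD hm hcard,
    ← Finset.mul_prod_erase _ _ hv, pow_two]
  intro hdvd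
  obtain ⟨w, hw, hvw⟩ := (v.prime.dvd_finsetProd_iff _).mp
    ((mul_dvd_mul_iff_left v.prime.ne_zero).mp hdvd)
  exact Finset.ne_of_mem_erase hw
    (HeightOneSpectrum.ext (w.isMaximal.eq_of_le v.isPrime.ne_top (Ideal.le_of_dvd hvw)))

end

end PrimesAbove

section LocalNorms

open WithZero

theorem eq_zero_of_sq_eq_exp_mul_sq {a b : ℤᵐ⁰} (h : a ^ 2 = exp (-1) * b ^ 2) : b = 0 := by
  by_contra hb
  have hlog := congrArg log h
  rw [log_mul exp_ne_zero (pow_ne_zero 2 hb), log_pow, log_pow, log_exp, nsmul_eq_mul,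
    nsmul_eq_mul] at hlog
  push_cast at hlog
  omega

theorem valuation_le_one_and_lt_one_of_sub_mul_sq {F : Type*} [Field F] {v : Valuation F ℤᵐ⁰}
    {D x y : F} (hD : v D = exp (-1)) (h : v (x ^ 2 - D * y ^ 2) = 1) :
    v x ≤ 1 ∧ v (D * y ^ 2) < 1 := by
  obtain rfl | hy := eq_or_ne y 0
  · have hx : v x ^ 2 = 1 := by simpa using h
    exact ⟨(pow_le_one_iff_of_nonneg zero_le two_ne_zero).mp hx.le, by simp⟩
  have hne (c : ℤᵐ⁰) : c ^ 2 ≠ v (D * y ^ 2) := by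
    rw [map_mul, map_pow, hD]
    exact fun hc => hy ((map_eq_zero v).mp (eq_zero_of_sq_eq_exp_mul_sq hc))
  have hmax : max (v (x ^ 2)) (v (D * y ^ 2)) = 1 := by
    rw [← h, sub_eq_add_neg, Valuation.map_add_of_distinct_val _, Valuation.map_neg]
    rw [Valuation.map_neg, map_pow]
    exact hne _
  constructor
  · rw [← pow_le_one_iff_of_nonneg zero_le two_ne_zero, ← map_pow]
    exact hmax ▸ le_max_left _ _
  · exact (hmax ▸ le_max_right _ _ : v (D * y ^ 2) ≤ 1).lt_of_ne' (one_pow (M := ℤᵐ⁰) 2 ▸ hne 1)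

variable {R F : Type*} [CommRing R] [IsDedekindDomain R] [Field F] [Algebra R F]
  [IsFractionRing R F] {v : HeightOneSpectrum R} {D : R}

theorem valuation_eq_exp_neg_one (hD : D ∈ v.asIdeal) (hD2 : D ∉ v.asIdeal ^ 2) :
    v.valuation F (algebraMap R F D) = exp (-1) := by
  have h1 := (v.intValuation_le_pow_iff_mem D 1).mpr (by rwa [pow_one])
  have h2 := (v.intValuation_le_pow_iff_mem D 2).not.mpr hD2
  have h0 : v.intValuation D ≠ 0 := fun h0 => h2 (h0 ▸ zero_le)
  rw [HeightOneSpectrum.valuation_of_algebraMap]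
  rw [← exp_log h0, exp_le_exp] at h1 h2
  rw [← exp_log h0]
  congr 1
  push_cast at h1 h2
  omega

theorem isSquare_mk_of_eq_sq_sub_mul_sq (hD : D ∈ v.asIdeal) (hD2 : D ∉ v.asIdeal ^ 2) {ε : R}
    (hε : ε ∉ v.asIdeal) {x y : F} (h : x ^ 2 - algebraMap R F D * y ^ 2 = algebraMap R F ε) :
    IsSquare (Ideal.Quotient.mk v.asIdeal ε) := by
  have hval : v.valuation F (x ^ 2 - algebraMap R F D * y ^ 2) = 1 :=
    h ▸ (HeightOneSpectrum.valuation_eq_one_iff_notMem v).mpr hε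
  obtain ⟨hx, hy⟩ :=
    valuation_le_one_and_lt_one_of_sub_mul_sq (valuation_eq_exp_neg_one hD hD2) hval
  obtain ⟨a, b, hab⟩ := v.exists_primeCompl_mul_eq_of_integer x hx
  have hmem : a ^ 2 - ε * b ^ 2 ∈ v.asIdeal := by
    have heq : algebraMap R F (a ^ 2 - ε * b ^ 2) =
        (algebraMap R F D * y ^ 2) * algebraMap R F (b ^ 2) := by
      simp only [map_sub, map_mul, map_pow, ← hab, ← h]
      ring
    have hlt : v.valuation F (algebraMap R F (a ^ 2 - ε * b ^ 2)) < 1 := by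
      rw [heq, map_mul]
      exact mul_lt_one_of_lt_of_le hy (v.valuation_le_one _)
    exact (HeightOneSpectrum.valuation_lt_one_iff_mem v _).mp hlt
  let := Ideal.Quotient.field v.asIdeal
  have hb : Ideal.Quotient.mk v.asIdeal (b : R) ≠ 0 :=
    Ideal.Quotient.eq_zero_iff_mem.not.mpr b.2
  refine ⟨Ideal.Quotient.mk _ a / Ideal.Quotient.mk _ (b : R), ?_⟩
  rw [← Ideal.Quotient.eq_zero_iff_mem, map_sub, map_mul, map_pow, map_pow, sub_eq_zero] at hmem
  field_simp
  exact hmem.symm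

end LocalNorms

section Step

theorem isUnramifiedAtInfinitePlaces_of_isTotallyComplex (F K : Type*) [Field F] [Field K]
    [Algebra F K] [IsTotallyComplex F] : IsUnramifiedAtInfinitePlaces F K where
  isUnramified _ := InfinitePlace.isUnramified_iff.mpr (Or.inr (IsTotallyComplex.isComplex _))

variable {F K : Type*} [Field F] [Field K] [Algebra F K] [NumberField F] [NumberField K]
  [Algebra.IsQuadraticExtension F K] {D : ℤ} {δ : K}

theorem notMem_normUnits (hδ : δ ^ 2 = D) (hsq : ¬ IsSquare (D : F))
    {v : HeightOneSpectrum (𝓞 F)} (hD : (D : 𝓞 F) ∈ v.asIdeal) (hD2 : (D : 𝓞 F) ∉ v.asIdeal ^ 2)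
    {ε : (𝓞 F)ˣ} (hε : ¬ IsSquare (Ideal.Quotient.mk v.asIdeal (ε : 𝓞 F))) :
    ε ∉ normUnits F K := by
  intro hnorm
  obtain ⟨x, hx⟩ := mem_normUnits.mp hnorm
  have hδ' : δ ^ 2 = algebraMap F K D := by rw [hδ, map_intCast]
  obtain ⟨a, b, rfl⟩ := exists_eq_add_mul_sqrt hsq hδ' x
  rw [norm_add_mul_sqrt hsq hδ', ← map_intCast (algebraMap (𝓞 F) F)] at hx
  exact hε (isSquare_mk_of_eq_sq_sub_mul_sq hD hD2
    (fun h => v.isPrime.ne_top (Ideal.eq_top_of_isUnit_mem _ h ε.isUnit)) hx)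

variable [IsTotallyComplex F]

theorem odd_classNumber_of_sqrt (hD0 : D ≠ 0) (hD4 : D % 4 = 1) (hδ : δ ^ 2 = D)
    (hsq : ¬ IsSquare (D : F)) (hF : Odd (classNumber F))
    (hcard : 2 ^ (primesAbove F hD0).card ∣ 2 * (normUnits F K).index) : Odd (classNumber K) := by
  have := isUnramifiedAtInfinitePlaces_of_isTotallyComplex F K
  have htop := adjoin_sqrt_eq_top hsq (hδ.trans (map_intCast (algebraMap F K) D).symm)
  exact odd_classNumber_of_isQuadraticExtension hF (fun v hv =>
    isUnramifiedIn_of_sq_eq_intCast hD4 hδ htop (mem_primesAbove.not.mp hv)) hcard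

variable (hD : Prime D) (hD4 : D % 4 = 1) (hδ : δ ^ 2 = D) (hsq : ¬ IsSquare (D : F))
  (hF : Odd (classNumber F)) {m : ℕ}
  (hm : ∀ v ∈ primesAbove F hD.ne_zero, D.natAbs ^ m ∣ Ideal.absNorm v.asIdeal)

include hD4 hδ hsq hF hm

theorem odd_classNumber_of_finrank_lt (hn : Module.finrank ℚ F < 2 * m) :
    Odd (classNumber K) := by
  have hcard : (primesAbove F hD.ne_zero).card < 2 :=
    lt_of_mul_lt_mul_left' ((mul_card_primesAbove_le hD hm).trans_lt (hn.trans_eq (mul_comm 2 m)))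
  exact odd_classNumber_of_sqrt hD.ne_zero hD4 hδ hsq hF
    (((pow_dvd_pow 2 (Nat.lt_succ_iff.mp hcard)).trans (pow_one 2).dvd).mul_right _)

theorem odd_classNumber_of_finrank_eq (hn : Module.finrank ℚ F = 2 * m) {ε : (𝓞 F)ˣ}
    (hε : ∀ v : HeightOneSpectrum (𝓞 F), (D : 𝓞 F) ∈ v.asIdeal →
      Ideal.absNorm v.asIdeal = D.natAbs ^ m →
        ¬ IsSquare (Ideal.Quotient.mk v.asIdeal (ε : 𝓞 F))) :
    Odd (classNumber K) := by
  refine odd_classNumber_of_sqrt hD.ne_zero hD4 hδ hsq hF ?_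
  have hm0 : 0 < m := by have := Module.finrank_pos (R := ℚ) (M := F); omega
  have hle : (primesAbove F hD.ne_zero).card ≤ 2 := Nat.le_of_mul_le_mul_left
    ((mul_card_primesAbove_le hD hm).trans_eq (hn.trans (mul_comm 2 m))) hm0
  obtain hcard | hcard := hle.lt_or_eq
  · exact ((pow_dvd_pow 2 (Nat.lt_succ_iff.mp hcard)).trans (pow_one 2).dvd).mul_right _
  have hn' : m * (primesAbove F hD.ne_zero).card = Module.finrank ℚ F := by
    rw [hcard, hn, mul_comm]
  obtain ⟨v, hv⟩ : (primesAbove F hD.ne_zero).Nonempty := Finset.card_pos.mp (by omega)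
  have hvD := mem_primesAbove.mp hv
  have hnorm : ε ∉ normUnits F K := notMem_normUnits hδ hsq hvD
    (notMem_sq_of_mem_primesAbove hD hm hn' hv)
    (hε v hvD (absNorm_eq_pow_of_mem_primesAbove hD hm hn' hv))
  rw [hcard, pow_two]
  exact mul_dvd_mul_left 2 (two_dvd_index_normUnits hnorm)

end Step

section Gaussian

variable {F : Type*} [Field F] [NumberField F] {i : F}

theorem isPrimitiveRoot_four_of_sq_eq_neg_one (hi : i ^ 2 = -1) : IsPrimitiveRoot i (2 ^ 2) := by
  have : Fact (Nat.Prime 2) := ⟨Nat.prime_two⟩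
  rw [IsPrimitiveRoot.iff_orderOf]
  refine orderOf_eq_prime_pow ?_ ?_
  · rw [pow_one, hi]
    norm_num
  · rw [pow_succ, pow_mul, pow_one, hi]
    norm_num

theorem isTotallyComplex_of_sq_eq_neg_one (hi : i ^ 2 = -1) : IsTotallyComplex F :=
  nrRealPlaces_eq_zero_iff.mp
    (InfinitePlace.IsPrimitiveRoot.nrRealPlaces_eq_zero_of_two_lt (by norm_num)
      (isPrimitiveRoot_four_of_sq_eq_neg_one hi))

theorem not_isSquare_neg_one_rat : ¬ IsSquare (-1 : ℚ) := by
  rintro ⟨r, hr⟩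
  nlinarith [mul_self_nonneg r]

variable [Algebra.IsQuadraticExtension ℚ F]

theorem isCyclotomicExtension_four_of_sq_eq_neg_one (hi : i ^ 2 = -1) :
    IsCyclotomicExtension {2 ^ 2} ℚ F := by
  have hprim := isPrimitiveRoot_four_of_sq_eq_neg_one hi
  refine (IsCyclotomicExtension.iff_singleton _ _ _).mpr ⟨⟨i, hprim⟩, fun x => ?_⟩
  have hx : x ∈ Algebra.adjoin ℚ {i} := by
    rw [adjoin_sqrt_eq_top not_isSquare_neg_one_rat (K := F) (δ := i) (by simp [hi])]
    exact Algebra.mem_top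
  refine Algebra.adjoin_mono ?_ hx
  rw [Set.singleton_subset_iff, Set.mem_ofPred_eq]
  exact hprim.pow_eq_one

theorem odd_classNumber_gaussian (hi : i ^ 2 = -1) : Odd (classNumber F) := by
  have : Fact (Nat.Prime 2) := ⟨Nat.prime_two⟩
  have := isCyclotomicExtension_four_of_sq_eq_neg_one hi
  have hcomplex : InfinitePlace.nrComplexPlaces F = 1 := by
    rw [IsCyclotomicExtension.Rat.nrComplexPlaces_eq_totient_div_two (2 ^ 2) F]
    decide
  have hdiscr : discr F = -4 := by
    rw [IsCyclotomicExtension.Rat.discr_prime_pow 2 2 F]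
    norm_num [show Nat.totient 4 = 2 by decide]
  have hpid : IsPrincipalIdealRing (𝓞 F) := by
    apply RingOfIntegers.isPrincipalIdealRing_of_abs_discr_lt
    rw [Algebra.IsQuadraticExtension.finrank_eq_two, hcomplex, hdiscr]
    have := Real.pi_gt_three
    norm_num
    nlinarith
  rw [classNumber_eq_one_iff.mpr hpid]
  exact odd_one

end Gaussian

section Pell

theorem eq_sq_of_isCoprime {a b c : ℤ} (h : IsCoprime a b) (ha : 0 ≤ a) (heq : a * b = c ^ 2) :
    ∃ d, a = d ^ 2 := by
  obtain ⟨d, hd | hd⟩ := Int.sq_of_isCoprime h heq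
  · exact ⟨d, hd⟩
  · exact ⟨0, by nlinarith [sq_nonneg d]⟩

variable {p : ℕ} (hp : p.Prime)

include hp

theorem exists_sq_of_mul_eq_prime_mul_sq {a b y : ℤ} (h : IsCoprime a b) (ha : 0 ≤ a)
    (hb : 0 ≤ b) (heq : a * b = p * y ^ 2) :
    ∃ s t : ℤ, a = p * s ^ 2 ∧ b = t ^ 2 ∨ a = t ^ 2 ∧ b = p * s ^ 2 := by
  wlog hpa : (p : ℤ) ∣ a generalizing a b
  · have hpb : (p : ℤ) ∣ b :=
      ((Nat.prime_iff_prime_int.mp hp).dvd_or_dvd ⟨y ^ 2, heq⟩).resolve_left hpa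
    obtain ⟨s, t, hst⟩ := this h.symm hb ha (by rw [mul_comm, heq]) hpb
    exact ⟨s, t, by tauto⟩
  obtain ⟨r, rfl⟩ := hpa
  have hp0 : (0 : ℤ) < p := by exact_mod_cast hp.pos
  have hr : 0 ≤ r := nonneg_of_mul_nonneg_right ha hp0
  have heq' : r * b = y ^ 2 := mul_left_cancel₀ hp0.ne' (by rw [← heq]; ring)
  have hrb : IsCoprime r b := h.of_mul_left_right
  obtain ⟨s, hs⟩ := eq_sq_of_isCoprime hrb hr heq'
  obtain ⟨t, ht⟩ := eq_sq_of_isCoprime hrb.symm hb (by rw [mul_comm, heq'])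
  exact ⟨s, t, Or.inl ⟨by rw [hs], ht⟩⟩

theorem exists_sq_sub_prime_mul_sq_of_even {x y : ℤ} (hx : 1 < x) (heven : Even x)
    (h : x ^ 2 - p * y ^ 2 = 1) :
    ∃ s t : ℤ, t ^ 2 - p * s ^ 2 = 2 ∨ t ^ 2 - p * s ^ 2 = -2 := by
  obtain ⟨u, rfl⟩ := heven
  obtain ⟨s, t, hst⟩ := exists_sq_of_mul_eq_prime_mul_sq hp (a := u + u - 1) (b := u + u + 1)
    (y := y) ⟨u, 1 - u, by ring⟩ (by omega) (by omega) (by linear_combination h)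
  refine ⟨s, t, hst.imp ?_ ?_⟩
  · rintro ⟨ha, hb⟩
    linear_combination ha - hb
  · rintro ⟨ha, hb⟩
    linear_combination hb - ha

theorem even_of_odd_sq_sub_prime_mul_sq {x y : ℤ} (hx : Odd x) (h : x ^ 2 - p * y ^ 2 = 1) :
    Even y := by
  obtain ⟨u, rfl⟩ := hx
  by_contra hy
  obtain ⟨w, rfl⟩ := Int.not_even_iff_odd.mp hy
  have hp4 : (p : ℤ) = 4 * (u * (u + 1) - p * (w ^ 2 + w)) := by linear_combination -h
  have h4 : 2 * 2 ∣ p := by exact_mod_cast Dvd.intro _ hp4.symm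
  exact Nat.prime_two.ne_one (Nat.isUnit_iff.mp
    ((Nat.squarefree_iff_prime_squarefree.mp hp.prime.squarefree 2 Nat.prime_two h4).elim))

theorem exists_sq_sub_prime_mul_sq_of_odd {a : Pell.Solution₁ (p : ℤ)} (ha : Pell.IsFundamental a)
    (hodd : Odd a.x) : ∃ s t : ℤ, t ^ 2 - p * s ^ 2 = -1 := by
  obtain ⟨h1, -, hmin⟩ := ha
  have heq := a.prop
  obtain ⟨w, hw⟩ := even_of_odd_sq_sub_prime_mul_sq hp hodd heq
  obtain ⟨u, hu⟩ := hodd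
  obtain ⟨s, t, ⟨hs, ht⟩ | ⟨ht, hs⟩⟩ :=
    exists_sq_of_mul_eq_prime_mul_sq hp (a := u) (b := u + 1) (y := w)
      ⟨-1, 1, by ring⟩ (by omega) (by omega) (by
        rw [hu, hw] at heq
        exact mul_left_cancel₀ (four_ne_zero' ℤ) (by linear_combination heq))
  · have hsol : |t| ^ 2 - p * s ^ 2 = 1 := by
      rw [sq_abs]
      linear_combination hs - ht
    have ht1 : 1 < |t| := by
      refine (one_lt_sq_iff₀ (abs_nonneg t)).mp ?_
      rw [sq_abs]
      omega
    have hle : a.x ≤ |t| := hmin (b := Pell.Solution₁.mk |t| s hsol) ht1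
    nlinarith [sq_abs t]
  · exact ⟨s, t, by linear_combination hs - ht⟩

theorem exists_sq_sub_prime_mul_sq :
    ∃ s t : ℤ, t ^ 2 - p * s ^ 2 = -1 ∨ t ^ 2 - p * s ^ 2 = 2 ∨ t ^ 2 - p * s ^ 2 = -2 := by
  obtain ⟨a, ha⟩ := Pell.IsFundamental.exists_of_not_isSquare (by exact_mod_cast hp.pos)
    (Nat.prime_iff_prime_int.mp hp).not_isSquare
  obtain heven | hodd := Int.even_or_odd a.x
  · obtain ⟨s, t, h⟩ := exists_sq_sub_prime_mul_sq_of_even hp ha.1 heven a.prop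
    exact ⟨s, t, Or.inr h⟩
  · obtain ⟨s, t, h⟩ := exists_sq_sub_prime_mul_sq_of_odd hp ha hodd
    exact ⟨s, t, Or.inl h⟩

theorem exists_sq_sub_prime_mul_sq_eq_neg_one (hp4 : p % 4 = 1) :
    ∃ s t : ℤ, t ^ 2 - p * s ^ 2 = -1 := by
  obtain ⟨s, t, h⟩ := exists_sq_sub_prime_mul_sq hp
  have hp1 : (p : ZMod 4) = 1 := by
    rw [← ZMod.natCast_mod, hp4, Nat.cast_one]
  have hmod : ∀ t s : ZMod 4, t ^ 2 - s ^ 2 ≠ 2 ∧ t ^ 2 - s ^ 2 ≠ -2 := by decide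
  refine ⟨s, t, h.resolve_right ?_⟩
  rintro (h | h)
  · exact (hmod t s).1 (by simpa [hp1] using congrArg (Int.cast : ℤ → ZMod 4) h)
  · exact (hmod t s).2 (by simpa [hp1] using congrArg (Int.cast : ℤ → ZMod 4) h)

theorem exists_sq_sub_prime_mul_sq_eq_neg_two (hp8 : p % 8 = 3) :
    ∃ s t : ℤ, t ^ 2 - p * s ^ 2 = -2 := by
  obtain ⟨s, t, h⟩ := exists_sq_sub_prime_mul_sq hp
  have hp3 : (p : ZMod 8) = 3 := by
    rw [← ZMod.natCast_mod, hp8, Nat.cast_ofNat]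
  have hmod : ∀ t s : ZMod 8, t ^ 2 - 3 * s ^ 2 ≠ -1 ∧ t ^ 2 - 3 * s ^ 2 ≠ 2 := by decide
  obtain h | h | h := h
  · exact absurd (by simpa [hp3] using congrArg (Int.cast : ℤ → ZMod 8) h) (hmod t s).1
  · exact absurd (by simpa [hp3] using congrArg (Int.cast : ℤ → ZMod 8) h) (hmod t s).2
  · exact ⟨s, t, h⟩

end Pell

section ResidueField

theorem not_isSquare_of_pow_eq_neg_one {k : Type*} [Field k] [Finite k] {x : k} {n j : ℕ}
    (hx : x ^ n = -1) (hj : Odd j) (hcard : Nat.card k = 2 * (n * j) + 1) : ¬ IsSquare x := by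
  have := Fintype.ofFinite k
  have hchar : ringChar k ≠ 2 := by
    rw [Ne, FiniteField.even_card_iff_char_two, ← Nat.card_eq_fintype_card, hcard]
    omega
  rintro ⟨y, rfl⟩
  have hy : y ≠ 0 := by
    rintro rfl
    obtain rfl | hn := eq_or_ne n 0
    · exact Ring.neg_one_ne_one_of_char_ne_two hchar (by simpa using hx.symm)
    · simp [hn] at hx
  have h1 := FiniteField.pow_card_sub_one_eq_one y hy
  rw [← Nat.card_eq_fintype_card, hcard, Nat.add_sub_cancel, pow_mul, pow_mul, pow_two, hx,
    hj.neg_one_pow] at h1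
  exact Ring.neg_one_ne_one_of_char_ne_two hchar h1

theorem not_isSquare_of_sq_eq_neg_one {k : Type*} [Field k] [Finite k] (hcard : Nat.card k % 8 = 5)
    {x : k} (hx : x ^ 2 = -1) : ¬ IsSquare x :=
  not_isSquare_of_pow_eq_neg_one hx (j := 2 * (Nat.card k / 8) + 1) ⟨_, rfl⟩ (by omega)

variable {k : Type*} [Field k] {q : ℕ}

theorem not_isSquare_of_pow_succ_eq_neg_one [Finite k] (hq : q % 4 = 3)
    (hcard : Nat.card k = q ^ 2) {x : k} (hx : x ^ (q + 1) = -1) : ¬ IsSquare x := by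
  obtain ⟨j, rfl⟩ : ∃ j, q = 4 * j + 3 := ⟨q / 4, by omega⟩
  exact not_isSquare_of_pow_eq_neg_one hx ⟨j, rfl⟩ (by rw [hcard]; ring)

variable [Fact q.Prime] [CharP k q] (hq4 : q % 4 = 3)

theorem pow_eq_neg_of_sq_eq (hq : q % 2 = 1) {n : ℤ} (hn : jacobiSym n q = -1) {S : k}
    (hS : S ^ 2 = n) : S ^ q = -S := by
  rw [← jacobiSym.legendreSym.to_jacobiSym] at hn
  have hpow : (-1 : k) = S ^ (2 * (q / 2)) := by
    have h := congrArg (ZMod.castHom dvd_rfl k) (legendreSym.eq_pow q n)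
    rwa [hn, map_pow, map_intCast, map_intCast, ← hS, ← pow_mul, Int.cast_neg, Int.cast_one] at h
  conv_lhs => rw [← Nat.div_add_mod q 2, hq, pow_succ, ← hpow, neg_one_mul]

variable {n : ℤ} (hn : jacobiSym n q = -1) {S : k} (hS : S ^ 2 = n) {a b : ℤ}

include hq4 hn hS

theorem add_mul_sqrt_pow_eq : (a + b * S) ^ q = a - b * S := by
  rw [← frobenius_def, map_add, map_mul, map_intCast, map_intCast, frobenius_def,
    pow_eq_neg_of_sq_eq (by omega) hn hS]
  ring

variable [Finite k] (hcard : Nat.card k = q ^ 2)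

include hcard

theorem not_isSquare_add_mul_sqrt (hab : a ^ 2 - n * b ^ 2 = -1) : ¬ IsSquare (a + b * S) := by
  refine not_isSquare_of_pow_succ_eq_neg_one hq4 hcard ?_
  have hab' : (a : k) ^ 2 - n * b ^ 2 = -1 := by exact_mod_cast congrArg (Int.cast : ℤ → k) hab
  rw [pow_succ, add_mul_sqrt_pow_eq hq4 hn hS]
  linear_combination hab' - b ^ 2 * hS

theorem not_isSquare_of_two_mul_eq (hab : a ^ 2 - n * b ^ 2 = -2) {I : k} (hI : I ^ 2 = -1)
    {x : k} (hx : 2 * x = (a + b * S) * (1 + I)) : ¬ IsSquare x := by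
  have h2 : (2 : k) ≠ 0 := Ring.two_ne_zero (by
    rw [ringChar.eq k q]
    omega)
  refine not_isSquare_of_pow_succ_eq_neg_one hq4 hcard ?_
  have hab' : (a : k) ^ 2 - n * b ^ 2 = -2 := by exact_mod_cast congrArg (Int.cast : ℤ → k) hab
  have hneg : jacobiSym (-1) q = -1 := by
    rw [jacobiSym.at_neg_one (Nat.odd_iff.mpr (by omega)), ZMod.χ₄_nat_three_mod_four hq4]
  have hfrob : 2 * x ^ q = (a - b * S) * (1 - I) := by
    have h := congrArg (frobenius k q) hx
    rw [map_mul, map_mul, map_ofNat, map_add _ 1 I, map_one, frobenius_def, frobenius_def,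
      frobenius_def, add_mul_sqrt_pow_eq hq4 hn hS,
      pow_eq_neg_of_sq_eq (S := I) (by omega) hneg (by simpa using hI)] at h
    rw [h, sub_eq_add_neg 1 I]
  rw [pow_succ]
  refine mul_left_cancel₀ (mul_ne_zero h2 h2) ?_
  calc 2 * 2 * (x ^ q * x) = (2 * x ^ q) * (2 * x) := by ring
    _ = (a ^ 2 - b ^ 2 * S ^ 2) * (1 - I ^ 2) := by rw [hfrob, hx]; ring
    _ = 2 * 2 * -1 := by rw [hS, hI]; linear_combination 2 * hab'

end ResidueField

section Units

variable {F : Type*} [Field F] {n a b : ℤ}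

theorem exists_sq_eq_intCast {x : F} (hx : x ^ 2 = n) : ∃ y : 𝓞 F, y ^ 2 = n := by
  have hint : IsIntegral ℤ x := IsIntegral.of_pow two_pos (hx ▸ isIntegral_algebraMap)
  obtain ⟨y, rfl⟩ := (IsIntegralClosure.isIntegral_iff (A := 𝓞 F)).mp hint
  exact ⟨y, FaithfulSMul.algebraMap_injective (𝓞 F) F (by rw [map_pow, hx, map_intCast])⟩

theorem exists_unit_eq_add_mul_sqrt {R : Type*} [CommRing R] {s : R} (hs : s ^ 2 = n)
    (hab : a ^ 2 - n * b ^ 2 = -1) : ∃ ε : Rˣ, (ε : R) = a + b * s := by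
  have hab' : (a : R) ^ 2 - n * b ^ 2 = -1 := by exact_mod_cast congrArg (Int.cast : ℤ → R) hab
  exact ⟨Units.mkOfMulEqOne (a + b * s) (b * s - a) (by linear_combination b ^ 2 * hs - hab'), rfl⟩

variable [CharZero F] {s i : 𝓞 F}

theorem exists_two_mul_eq (hs : s ^ 2 = n) (hi : i ^ 2 = -1) (hab : a ^ 2 - n * b ^ 2 = -2) :
    ∃ e : 𝓞 F, 2 * e = (a + b * s) * (1 + i) := by
  have hab' : (a : 𝓞 F) ^ 2 - n * b ^ 2 = -2 := by
    exact_mod_cast congrArg (Int.cast : ℤ → 𝓞 F) hab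
  have hsq : ((a + b * s) * (1 + i)) ^ 2 = 4 * (i * (a ^ 2 + 1 + a * b * s)) := by
    linear_combination (a + b * s) ^ 2 * hi + 2 * i * b ^ 2 * hs - 2 * i * hab'
  have hint : IsIntegral ℤ (algebraMap (𝓞 F) F ((a + b * s) * (1 + i)) / 2) := by
    refine IsIntegral.of_pow two_pos ?_
    rw [div_pow, ← map_pow, hsq, map_mul, map_ofNat, show (2 : F) ^ 2 = 4 by norm_num,
      mul_div_cancel_left₀ _ (by norm_num)]
    exact RingOfIntegers.isIntegral_coe _
  obtain ⟨e, he⟩ := (IsIntegralClosure.isIntegral_iff (A := 𝓞 F)).mp hint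
  refine ⟨e, FaithfulSMul.algebraMap_injective (𝓞 F) F ?_⟩
  rw [map_mul (algebraMap (𝓞 F) F) 2, map_ofNat, he, mul_div_cancel₀ _ two_ne_zero]

theorem exists_unit_two_mul_eq (hs : s ^ 2 = n) (hi : i ^ 2 = -1) (hab : a ^ 2 - n * b ^ 2 = -2) :
    ∃ ε : (𝓞 F)ˣ, 2 * (ε : 𝓞 F) = (a + b * s) * (1 + i) := by
  obtain ⟨e, he⟩ := exists_two_mul_eq hs hi hab
  obtain ⟨e', he'⟩ := exists_two_mul_eq (s := -s) (i := -i) (by rw [neg_sq, hs])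
    (by rw [neg_sq, hi]) hab
  have hab' : (a : 𝓞 F) ^ 2 - n * b ^ 2 = -2 := by
    exact_mod_cast congrArg (Int.cast : ℤ → 𝓞 F) hab
  refine ⟨Units.mkOfMulEqOne e (-e') ?_, he⟩
  refine mul_left_cancel₀ (by norm_num : (4 : 𝓞 F) ≠ 0) ?_
  calc 4 * (e * -e') = - ((2 * e) * (2 * e')) := by ring
    _ = - ((a ^ 2 - b ^ 2 * s ^ 2) * (1 - i ^ 2)) := by rw [he, he']; ring
    _ = 4 * 1 := by rw [hs, hi]; linear_combination -2 * hab'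

end Units

section Squares

theorem not_isSquare_neg {R : Type*} [CommRing R] {i x : R} (hi : i ^ 2 = -1)
    (hx : ¬ IsSquare x) : ¬ IsSquare (-x) := by
  rintro ⟨y, hy⟩
  exact hx ⟨i * y, by linear_combination -hy - y ^ 2 * hi⟩

theorem not_isSquare_natCast_gaussian {F : Type*} [Field F] [CharZero F]
    [Algebra.IsQuadraticExtension ℚ F] {i : F} (hi : i ^ 2 = -1) {n : ℕ} (hn : ¬ IsSquare n) :
    ¬ IsSquare (n : F) := by
  intro h
  obtain h | ⟨r, hr⟩ := isSquare_or_isSquare_mul not_isSquare_neg_one_rat (δ := i) (by simp [hi])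
    (c := (n : ℚ)) (by simpa using h)
  · exact hn (Rat.isSquare_natCast_iff.mp h)
  · obtain rfl : n = 0 := by
      have : (n : ℚ) = 0 := by linarith [mul_self_nonneg r, Nat.cast_nonneg (α := ℚ) n]
      exact_mod_cast this
    exact hn IsSquare.zero

theorem not_isSquare_mul_of_prime {p q : ℕ} (hp : p.Prime) (hq : q.Prime) (hpq : p ≠ q) :
    ¬ IsSquare (p * q) := by
  rintro ⟨r, hr⟩
  obtain ⟨t, rfl⟩ : p ∣ r := by
    have : p ∣ r * r := hr ▸ dvd_mul_right p q
    simpa using hp.dvd_mul.mp this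
  have hq' : q = p * (t * t) := Nat.eq_of_mul_eq_mul_left hp.pos (by rw [hr]; ring)
  exact hpq ((Nat.prime_dvd_prime_iff_eq hp hq).mp ⟨_, hq'⟩)

theorem not_isSquare_natCast_biquadratic {F K : Type*} [Field F] [CharZero F] [Field K]
    [Algebra F K] [Algebra.IsQuadraticExtension ℚ F] [Algebra.IsQuadraticExtension F K] {i : F}
    (hi : i ^ 2 = -1) {p q : ℕ} (hp : p.Prime) (hq : q.Prime) (hne : p ≠ q) {s : K}
    (hs : s ^ 2 = p) : ¬ IsSquare (q : K) := by
  intro h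
  obtain h | h := isSquare_or_isSquare_mul
    (not_isSquare_natCast_gaussian hi (Nat.prime_iff.mp hp).not_isSquare) (δ := s)
    (by rw [hs, map_natCast]) (c := (q : F)) (by rwa [map_natCast])
  · exact not_isSquare_natCast_gaussian hi (Nat.prime_iff.mp hq).not_isSquare h
  · exact not_isSquare_natCast_gaussian hi (not_isSquare_mul_of_prime hp hq hne)
      (by rwa [Nat.cast_mul])

end Squares

section Tower

theorem charP_quotient_of_mem {R : Type*} [CommRing R] {I : Ideal R} (hI : I ≠ ⊤) {l : ℕ}
    (hl : l.Prime) (hlI : (l : R) ∈ I) : CharP (R ⧸ I) l := by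
  have := Ideal.Quotient.nontrivial_iff.mpr hI
  exact (CharP.charP_iff_prime_eq_zero hl).mpr (by
    rw [← map_natCast (Ideal.Quotient.mk I), Ideal.Quotient.eq_zero_iff_mem.mpr hlI])

variable {F K : Type*} [Field F] [NumberField F] [Field K] [NumberField K] [Algebra F K]
  [Algebra.IsQuadraticExtension F K] {i : F} (hi : i ^ 2 = -1) {p q : ℕ} (hp : p.Prime)

include hi hp

theorem odd_classNumber_adjoin_sqrt_gaussian_of_mod_eight_eq_five
    [Algebra.IsQuadraticExtension ℚ F] (hp8 : p % 8 = 5) {s : K} (hs : s ^ 2 = p) :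
    Odd (classNumber K) := by
  have := isTotallyComplex_of_sq_eq_neg_one hi
  have hpF := not_isSquare_natCast_gaussian hi (Nat.prime_iff.mp hp).not_isSquare
  have hpℤ := Nat.prime_iff_prime_int.mp hp
  obtain ⟨j, hj⟩ := exists_sq_eq_intCast (n := -1) (by simpa using hi)
  rw [Int.cast_neg, Int.cast_one] at hj
  refine odd_classNumber_of_finrank_eq hpℤ (by omega) (δ := s) (by simpa using hs)
    (by simpa using hpF) (odd_classNumber_gaussian hi) (m := 1) ?_
    (Algebra.IsQuadraticExtension.finrank_eq_two ℚ F)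
    (ε := Units.mkOfMulEqOne j (-j) (by linear_combination -hj)) ?_
  · intro v hv
    obtain ⟨f, hf, h⟩ := exists_absNorm_eq_pow hpℤ (mem_primesAbove.mp hv)
    exact h ▸ pow_dvd_pow _ (Nat.one_le_iff_ne_zero.mpr hf)
  · intro v _ hnorm
    let := Ideal.Quotient.field v.asIdeal
    have : Finite (𝓞 F ⧸ v.asIdeal) := Ideal.finiteQuotientOfFreeOfNeBot _ v.ne_bot
    refine not_isSquare_of_sq_eq_neg_one ?_ ?_
    · rwa [← Submodule.cardQuot_apply, ← Ideal.absNorm_apply, hnorm, pow_one, Int.natAbs_natCast]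
    · rw [← map_pow, Units.val_mkOfMulEqOne, hj, map_neg, map_one]

theorem odd_classNumber_adjoin_sqrt_gaussian_of_mod_eight_eq_three
    [Algebra.IsQuadraticExtension ℚ F] (hp8 : p % 8 = 3) {s : K} (hs : s ^ 2 = p) :
    Odd (classNumber K) := by
  have := isTotallyComplex_of_sq_eq_neg_one hi
  have hpF := not_isSquare_natCast_gaussian hi (Nat.prime_iff.mp hp).not_isSquare
  have hpℤ := (Nat.prime_iff_prime_int.mp hp).neg
  obtain ⟨j, hj⟩ := exists_sq_eq_intCast (n := -1) (by simpa using hi)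
  rw [Int.cast_neg, Int.cast_one] at hj
  refine odd_classNumber_of_finrank_lt hpℤ (by omega) (δ := algebraMap F K i * s) ?_
    (by simpa using not_isSquare_neg hi hpF) (odd_classNumber_gaussian hi) (m := 2) ?_ ?_
  · rw [mul_pow, ← map_pow, hi, hs]
    simp
  · exact fun v hv => sq_dvd_absNorm hpℤ (by omega) hj (mem_primesAbove.mp hv)
  · rw [Algebra.IsQuadraticExtension.finrank_eq_two]
    norm_num

theorem odd_classNumber_adjoin_sqrt_gaussian [Algebra.IsQuadraticExtension ℚ F]
    (hp8 : p % 8 = 5 ∨ p % 8 = 3) {s : K} (hs : s ^ 2 = p) : Odd (classNumber K) :=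
  hp8.elim (odd_classNumber_adjoin_sqrt_gaussian_of_mod_eight_eq_five hi hp · hs)
    (odd_classNumber_adjoin_sqrt_gaussian_of_mod_eight_eq_three hi hp · hs)

variable (hp8 : p % 8 = 5 ∨ p % 8 = 3) (hq : q.Prime) (hq4 : q % 4 = 3)
  (hpq : jacobiSym p q = -1) {s : F} (hs : s ^ 2 = p)

include hp8 hq hq4 hpq hs

omit [Field K] [NumberField K] [Algebra F K] [Algebra.IsQuadraticExtension F K] in
theorem exists_unit_not_isSquare_quotient :
    ∃ ε : (𝓞 F)ˣ, ∀ v : HeightOneSpectrum (𝓞 F), (q : 𝓞 F) ∈ v.asIdeal →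
      Ideal.absNorm v.asIdeal = q ^ 2 → ¬ IsSquare (Ideal.Quotient.mk v.asIdeal (ε : 𝓞 F)) := by
  have : Fact q.Prime := ⟨hq⟩
  obtain ⟨j, hj⟩ := exists_sq_eq_intCast (n := -1) (by simpa using hi)
  obtain ⟨t, ht⟩ := exists_sq_eq_intCast (n := p) (by simpa using hs)
  rw [Int.cast_neg, Int.cast_one] at hj
  have htmod (v : HeightOneSpectrum (𝓞 F)) :
      Ideal.Quotient.mk v.asIdeal t ^ 2 = ((p : ℤ) : 𝓞 F ⧸ v.asIdeal) := by
    rw [← map_pow, ht, map_intCast]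
  obtain hp8 | hp8 := hp8
  · obtain ⟨b, a, hab⟩ := exists_sq_sub_prime_mul_sq_eq_neg_one hp (by omega)
    obtain ⟨ε, hε⟩ := exists_unit_eq_add_mul_sqrt ht hab
    refine ⟨ε, fun v hv hnorm => ?_⟩
    let := Ideal.Quotient.field v.asIdeal
    have : Finite (𝓞 F ⧸ v.asIdeal) := Ideal.finiteQuotientOfFreeOfNeBot _ v.ne_bot
    have := charP_quotient_of_mem v.isPrime.ne_top hq hv
    have h := not_isSquare_add_mul_sqrt hq4 hpq (htmod v)
      (by rwa [← Submodule.cardQuot_apply, ← Ideal.absNorm_apply]) hab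
    simpa [hε] using h
  · obtain ⟨b, a, hab⟩ := exists_sq_sub_prime_mul_sq_eq_neg_two hp hp8
    obtain ⟨ε, hε⟩ := exists_unit_two_mul_eq ht hj hab
    refine ⟨ε, fun v hv hnorm => ?_⟩
    let := Ideal.Quotient.field v.asIdeal
    have : Finite (𝓞 F ⧸ v.asIdeal) := Ideal.finiteQuotientOfFreeOfNeBot _ v.ne_bot
    have := charP_quotient_of_mem v.isPrime.ne_top hq hv
    refine not_isSquare_of_two_mul_eq hq4 hpq (htmod v)
      (by rwa [← Submodule.cardQuot_apply, ← Ideal.absNorm_apply]) hab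
      (I := Ideal.Quotient.mk v.asIdeal j) (by rw [← map_pow, hj, map_neg, map_one]) ?_
    simpa [map_ofNat] using congrArg (Ideal.Quotient.mk v.asIdeal) hε

theorem odd_classNumber_adjoin_sqrt_biquadratic (hF : Module.finrank ℚ F = 4)
    (hodd : Odd (classNumber F)) (hqF : ¬ IsSquare (q : F)) {r : K} (hr : r ^ 2 = q) :
    Odd (classNumber K) := by
  have := isTotallyComplex_of_sq_eq_neg_one hi
  have hqℤ := (Nat.prime_iff_prime_int.mp hq).neg
  obtain ⟨j, hj⟩ := exists_sq_eq_intCast (n := -1) (by simpa using hi)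
  rw [Int.cast_neg, Int.cast_one] at hj
  obtain ⟨ε, hε⟩ := exists_unit_not_isSquare_quotient hi hp hp8 hq hq4 hpq hs
  refine odd_classNumber_of_finrank_eq hqℤ (by omega) (δ := algebraMap F K i * r) ?_
    (by simpa using not_isSquare_neg hi hqF) hodd (m := 2) ?_ hF (ε := ε) ?_
  · rw [mul_pow, ← map_pow, hi, hr]
    simp
  · exact fun v hv => sq_dvd_absNorm hqℤ (by omega) hj (mem_primesAbove.mp hv)
  · exact fun v hv hnorm => hε v (by simpa using hv) (by simpa using hnorm)

end Tower

section AdjoinSqrt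

variable {F K : Type*} [Field F] [Field K] [Algebra F K] {D : F} {δ : K}

theorem isQuadraticExtension_adjoin_sqrt (hD : ¬ IsSquare D) (hδ : δ ^ 2 = algebraMap F K D) :
    Algebra.IsQuadraticExtension F F⟮δ⟯ where
  finrank_eq_two' := by
    have hirr : Irreducible (Polynomial.X ^ 2 - Polynomial.C D) :=
      X_pow_sub_C_irreducible_of_prime Nat.prime_two fun b hb => hD ⟨b, by rw [← hb, pow_two]⟩
    have hmonic := Polynomial.monic_X_pow_sub_C D two_ne_zero
    rw [adjoin.finrank ⟨_, hmonic, by simp [hδ]⟩,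
      ← minpoly.eq_of_irreducible_of_monic hirr (by simp [hδ]) hmonic,
      Polynomial.natDegree_X_pow_sub_C]

theorem isQuadraticExtension_of_adjoin_sqrt_eq_top (hD : ¬ IsSquare D)
    (hδ : δ ^ 2 = algebraMap F K D) (htop : F⟮δ⟯ = ⊤) : Algebra.IsQuadraticExtension F K where
  finrank_eq_two' := by
    have := isQuadraticExtension_adjoin_sqrt hD hδ
    rw [← finrank_top', ← htop, Algebra.IsQuadraticExtension.finrank_eq_two]

theorem adjoin_adjoin_adjoin_eq_top {x y z : K} (htop : adjoin F {x, y, z} = ⊤) :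
    F⟮z⟯⟮x⟯⟮y⟯ = ⊤ := by
  rw [← restrictScalars_eq_top_iff (K := F⟮z⟯), adjoin_simple_adjoin_simple,
    ← restrictScalars_eq_top_iff (K := F), adjoin_adjoin_left, ← htop]
  congr 1
  ext w
  simp only [Set.singleton_union, Set.mem_insert_iff, Set.mem_singleton_iff]
  tauto

theorem adjoin_preimage_coe_eq_top (S : Set K) : adjoin F (((↑) : adjoin F S → K) ⁻¹' S) = ⊤ := by
  apply lift_injective
  rw [lift_adjoin, lift_top, Set.image_preimage_eq_of_subset]
  exact fun x hx => ⟨⟨x, subset_adjoin F S hx⟩, rfl⟩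

end AdjoinSqrt

theorem mod_eight_of_jacobiSym_two {p : ℕ} (h : jacobiSym 2 p = -1) : p % 8 = 5 ∨ p % 8 = 3 := by
  obtain rfl | hp0 := eq_or_ne p 0
  · simp at h
  have : NeZero p := ⟨hp0⟩
  have hodd : Odd p := by
    refine Nat.not_even_iff_odd.mp fun heven => ?_
    rw [jacobiSym.eq_zero_iff_not_coprime.mpr] at h
    · norm_num at h
    · exact fun hcop => Nat.not_coprime_of_dvd_of_dvd one_lt_two dvd_rfl heven.two_dvd hcop
  rw [jacobiSym.at_two hodd, ZMod.χ₈_nat_eq_if_mod_eight] at h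
  split_ifs at h
  omega

theorem ne_of_jacobiSym_eq_neg_one {p q : ℕ} (h : jacobiSym p q = -1) : p ≠ q := by
  rintro rfl
  obtain hp | hp := le_or_gt p 1
  · interval_cases p <;> simp at h
  · rw [jacobiSym.mod_left, Int.emod_self, jacobiSym.zero_left hp] at h
    norm_num at h

theorem odd_classNumber_triquadratic {K : Type*} [Field K] [NumberField K] {p q : ℕ}
    (hp : p.Prime) (hp8 : p % 8 = 5 ∨ p % 8 = 3) (hq : q.Prime) (hq4 : q % 4 = 3)
    (hpq : jacobiSym p q = -1) {s r i : K} (hs : s ^ 2 = p) (hr : r ^ 2 = q) (hi : i ^ 2 = -1)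
    (htop : adjoin ℚ {s, r, i} = ⊤) : Odd (classNumber K) := by
  have hi₁ : AdjoinSimple.gen ℚ i ^ 2 = -1 := Subtype.ext (by simpa using hi)
  have hs₂ : AdjoinSimple.gen ℚ⟮i⟯ s ^ 2 = p := Subtype.ext (by simpa using hs)
  have : NumberField ℚ⟮i⟯⟮s⟯ := NumberField.of_module_finite ℚ⟮i⟯ ℚ⟮i⟯⟮s⟯
  have : Algebra.IsQuadraticExtension ℚ ℚ⟮i⟯ :=
    isQuadraticExtension_adjoin_sqrt not_isSquare_neg_one_rat (by simp [hi])
  have : Algebra.IsQuadraticExtension ℚ⟮i⟯ ℚ⟮i⟯⟮s⟯ := isQuadraticExtension_adjoin_sqrt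
    (not_isSquare_natCast_gaussian hi₁ (Nat.prime_iff.mp hp).not_isSquare) (by simp [hs])
  have hq₂ : ¬ IsSquare (q : ℚ⟮i⟯⟮s⟯) :=
    not_isSquare_natCast_biquadratic hi₁ hp hq (ne_of_jacobiSym_eq_neg_one hpq) hs₂
  have : Algebra.IsQuadraticExtension ℚ⟮i⟯⟮s⟯ K :=
    isQuadraticExtension_of_adjoin_sqrt_eq_top hq₂ (by simp [hr]) (adjoin_adjoin_adjoin_eq_top htop)
  have hfinrank : Module.finrank ℚ ℚ⟮i⟯⟮s⟯ = 4 := by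
    rw [← Module.finrank_mul_finrank ℚ ℚ⟮i⟯, Algebra.IsQuadraticExtension.finrank_eq_two,
      Algebra.IsQuadraticExtension.finrank_eq_two]
  exact odd_classNumber_adjoin_sqrt_biquadratic
    (i := algebraMap ℚ⟮i⟯ ℚ⟮i⟯⟮s⟯ (AdjoinSimple.gen ℚ i)) (by rw [← map_pow, hi₁, map_neg, map_one])
    hp hp8 hq hq4 hpq hs₂ hfinrank
    (odd_classNumber_adjoin_sqrt_gaussian hi₁ hp hp8 hs₂) hq₂ hr

theorem ofReal_sqrt_natCast_sq (n : ℕ) : ((Real.sqrt n : ℝ) : ℂ) ^ 2 = n := by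
  rw [← Complex.ofReal_pow, Real.sq_sqrt (Nat.cast_nonneg n), Complex.ofReal_natCast]

theorem statement4_general (p q : ℕ) (hp : p.Prime) (hq : q.Prime) (hq4 : q % 4 = 3)
    (h2p : jacobiSym 2 p = -1) (hpq : jacobiSym (p : ℤ) q = -1) [NumberField ↥(Kf p q)] :
    Odd (classNumber ↥(Kf p q)) := by
  set A : Set ℂ := {((Real.sqrt p : ℝ) : ℂ), ((Real.sqrt q : ℝ) : ℂ), Complex.I}
  have hmem : A ⊆ Kf p q := subset_adjoin ℚ A
  have htop : @adjoin ℚ _ (Kf p q) _ (Kf p q).algebra' ((↑) ⁻¹' A) = ⊤ :=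
    adjoin_preimage_coe_eq_top A
  rw [Subsingleton.elim (Kf p q).algebra' DivisionRing.toRatAlgebra] at htop
  refine odd_classNumber_triquadratic hp (mod_eight_of_jacobiSym_two h2p) hq hq4 hpq
    (s := ⟨(Real.sqrt p : ℝ), hmem (by simp [A])⟩) (r := ⟨(Real.sqrt q : ℝ), hmem (by simp [A])⟩)
    (i := ⟨Complex.I, hmem (by simp [A])⟩) (Subtype.ext (ofReal_sqrt_natCast_sq p))
    (Subtype.ext (ofReal_sqrt_natCast_sq q)) (Subtype.ext (by simp)) ?_
  convert htop using 2
  ext x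
  simp [A, Subtype.ext_iff]

theorem statement4 (p q : ℕ) (h : Cond1 p q ∨ Cond2 p q) [NumberField ↥(Kf p q)] :
    Odd (classNumber ↥(Kf p q)) := by
  obtain ⟨hp, hq, -, hq4, h2p, -, hpq⟩ | ⟨hp, hq, -, hq4, h2p, -, hpq⟩ := h <;>
    exact statement4_general p q hp hq hq4 h2p hpq
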